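/- There exists a constant c > 0 such that for all sufficiently large t, the on-line Ramsey number of the complete graph K_t satisfies r̃(t) ≤ t^{-c·(log t)/(log log t)} · 4^t, where log denotes the natural logarithm. -/

import Mathlib

/-- A monochromatic clique of size `k` in colour `i` for an edge-colouring `c` of `K_n`. -/
def monoClique {n q : ℕ} (c : Sym2 (Fin n) → Fin q) (i : Fin q) (k : ℕ) : Prop :=
  ∃ A : Finset (Fin n), A.card = k ∧ ∀ u ∈ A, ∀ v ∈ A, u ≠ v → c s(u, v) = i

/-- The `q`-colour Ramsey number `r(k 0, …, k (q-1))`. -/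
noncomputable def ramseyQ {q : ℕ} (k : Fin q → ℕ) : ℕ :=
  sInf {n : ℕ | ∀ c : Sym2 (Fin n) → Fin q, ∃ i : Fin q, monoClique c i (k i)}

/-- The two-colour Ramsey number `r(s, t)`. -/
noncomputable def ramsey2 (s t : ℕ) : ℕ := ramseyQ ![s, t]

/-- A history in the on-line Ramsey game: the previously presented edges with their colours. -/
abbrev History (q : ℕ) := List (Sym2 ℕ × Fin q)

/-- A Builder strategy is valid if it always presents a genuine new edge. -/
def validBuilder {q : ℕ} (B : History q → Sym2 ℕ) : Prop :=
  ∀ h : History q, ¬ (B h).IsDiag ∧ B h ∉ h.map Prod.fst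

/-- The play determined by a Builder strategy `B` and a Painter strategy `P`:
`play B P n` is the history after `n` rounds. -/
def play {q : ℕ} (B : History q → Sym2 ℕ) (P : History q → Sym2 ℕ → Fin q) : ℕ → History q
  | 0 => []
  | n + 1 =>
      let h := play B P n
      h ++ [(B h, P h (B h))]

/-- The graph formed by the edges of colour `i` in a history. -/
def colourGraph {q : ℕ} (h : History q) (i : Fin q) : SimpleGraph ℕ :=
  SimpleGraph.fromEdgeSet {e | (e, i) ∈ h}

/-- `H` contains a copy of `G` as a subgraph. -/
def containsCopy {V : Type*} (G : SimpleGraph V) (H : SimpleGraph ℕ) : Prop :=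
  ∃ f : V → ℕ, Function.Injective f ∧ ∀ u v, G.Adj u v → H.Adj (f u) (f v)

/-- The `q`-colour on-line Ramsey number of `G`: the least `N` such that Builder has a
valid strategy forcing, against every Painter strategy, a monochromatic copy of `G`
within at most `N` rounds. -/
noncomputable def onlineRamsey {V : Type*} (q : ℕ) (G : SimpleGraph V) : ℕ :=
  sInf {N : ℕ | ∃ B : History q → Sym2 ℕ, validBuilder B ∧
    ∀ P : History q → Sym2 ℕ → Fin q,
      ∃ n ≤ N, ∃ i : Fin q, containsCopy G (colourGraph (play B P n) i)}


/-! ### Geometric lemma -/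

/-- Gram kernels. -/
def GramK (K : ℕ → ℕ → ℝ) : Prop :=
  ∃ (ι : Type) (_ : Fintype ι) (g : ι → ℕ → ℝ), ∀ x y, K x y = ∑ v, g v x * g v y

lemma GramK.mul {K K' : ℕ → ℕ → ℝ} (h : GramK K) (h' : GramK K') :
    GramK (fun x y => K x y * K' x y) := by
  obtain ⟨ι, _, g, hg⟩ := h
  obtain ⟨κ, _, g', hg'⟩ := h'
  refine ⟨ι × κ, inferInstance, fun v x => g v.1 x * g' v.2 x, fun x y => ?_⟩
  simp only [hg, hg', Finset.sum_mul_sum, Fintype.sum_prod_type]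
  refine Finset.sum_congr rfl fun i _ => Finset.sum_congr rfl fun j _ => by ring

lemma GramK.one : GramK (fun _ _ => 1) :=
  ⟨Unit, inferInstance, fun _ _ => 1, fun x y => by simp⟩

lemma GramK.pow {K : ℕ → ℕ → ℝ} (h : GramK K) (n : ℕ) : GramK (fun x y => K x y ^ n) := by
  induction n with
  | zero => simpa using GramK.one
  | succ n ih => simpa [pow_succ] using ih.mul h

lemma GramK.nonneg {K : ℕ → ℕ → ℝ} (h : GramK K) (X : Finset ℕ) :
    0 ≤ ∑ z ∈ X ×ˢ X, K z.1 z.2 := by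
  obtain ⟨ι, _, g, hg⟩ := h
  rw [Finset.sum_product]
  have : ∑ x ∈ X, ∑ y ∈ X, K x y = ∑ v, (∑ x ∈ X, g v x) * (∑ x ∈ X, g v x) := by
    simp only [hg, Finset.sum_mul_sum]
    rw [Finset.sum_comm]
    rw [Finset.sum_comm]
    have : ∀ x ∈ X, ∑ y ∈ X, ∑ v, g v x * g v y = ∑ v, ∑ y ∈ X, g v x * g v y :=
      fun x _ => Finset.sum_comm
    rw [Finset.sum_congr rfl this, Finset.sum_comm]
  rw [this]
  exact Finset.sum_nonneg fun v _ => mul_self_nonneg _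

/-- `cosh √x` as a power series. -/
noncomputable def cc (x : ℝ) : ℝ := if 0 ≤ x then Real.cosh (√x) else Real.cos (√(-x))

lemma cc_hasSum (x : ℝ) : HasSum (fun n : ℕ => x ^ n / ((2 * n).factorial : ℝ)) (cc x) := by
  unfold cc
  split_ifs with h
  · have := Real.hasSum_cosh (√x)
    simpa [pow_mul, Real.sq_sqrt h] using this
  · have := Real.hasSum_cos (√(-x))
    have hx : 0 ≤ -x := by linarith
    simp only [pow_mul, Real.sq_sqrt hx] at this
    convert this using 2 with n
    rw [← mul_pow]; simp

lemma cc_neg_bounds {x : ℝ} (h : x ≤ 0) : -1 ≤ cc x ∧ cc x ≤ 1 := by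
  unfold cc
  split_ifs with h'
  · have : x = 0 := le_antisymm h h'
    simp [this]
  · exact ⟨Real.neg_one_le_cos _, Real.cos_le_one _⟩

lemma cc_pos_lower {x : ℝ} (h : 0 ≤ x) : 1 + x / 2 ≤ cc x := by
  have := sum_le_hasSum (Finset.range 2) (fun n _ => by positivity) (cc_hasSum x)
  simpa [Finset.sum_range_succ] using this

lemma cc_upper {x : ℝ} {n : ℕ} (h : x ≤ 6 * n) : 2 + cc x ≤ 3 * Real.exp (3 * √n) := by
  have h1 : 1 ≤ Real.exp (3 * √n) := Real.one_le_exp (by positivity)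
  rcases le_or_gt x 0 with h0 | h0
  · linarith [(cc_neg_bounds h0).2]
  · have : cc x ≤ Real.exp (√x) := by
      unfold cc
      rw [if_pos h0.le, Real.cosh_eq]
      have : Real.exp (-√x) ≤ Real.exp (√x) := Real.exp_le_exp.2 (by linarith [Real.sqrt_nonneg x])
      linarith
    have h2 : √x ≤ 3 * √n := by
      rw [show (3 : ℝ) * √n = √(9 * n) by
        rw [Real.sqrt_mul (by norm_num), show (9 : ℝ) = 3 ^ 2 by norm_num,
          Real.sqrt_sq (by norm_num)]]
      apply Real.sqrt_le_sqrt
      have : (0 : ℝ) ≤ n := by positivity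
      linarith
    have := Real.exp_le_exp.2 h2
    linarith

/-- The test function. -/
noncomputable def ff (x y : ℝ) : ℝ := x * (2 + cc y) + y * (2 + cc x)

lemma ff_symm (x y : ℝ) : ff x y = ff y x := by unfold ff; ring

lemma ff_bad {x : ℝ} (y : ℝ) (h : x < -6) : ff x y ≤ -6 := by
  unfold ff
  have hx := cc_neg_bounds (x := x) (by linarith)
  rcases le_or_gt y 0 with h0 | h0
  · have hy := cc_neg_bounds h0
    nlinarith
  · have hy := cc_pos_lower h0.le
    nlinarith

lemma ff_good {x y : ℝ} {n : ℕ} (hx : x ≤ 6 * n) (hy : y ≤ 6 * n) :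
    ff x y ≤ 36 * n * Real.exp (3 * √n) := by
  have key : ∀ {x y : ℝ}, x ≤ 6 * n → y ≤ 6 * n →
      x * (2 + cc y) ≤ 18 * n * Real.exp (3 * √n) := by
    intro x y hx hy
    have h1 := cc_upper hy
    have h2 : 0 ≤ 2 + cc y := by
      rcases le_or_gt y 0 with h0 | h0
      · linarith [(cc_neg_bounds h0).1]
      · linarith [cc_pos_lower h0.le]
    have h3 : (0 : ℝ) ≤ n := by positivity
    nlinarith [mul_le_mul_of_nonneg_right hx h2, mul_le_mul_of_nonneg_left h1 h3]
  unfold ff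
  linarith [key hx hy, key hy hx]

lemma ff_sum_nonneg {K K' : ℕ → ℕ → ℝ} (h : GramK K) (h' : GramK K') (X : Finset ℕ) :
    0 ≤ ∑ z ∈ X ×ˢ X, ff (6 * K z.1 z.2) (6 * K' z.1 z.2) := by
  have hs : HasSum (fun n : ℕ => ∑ z ∈ X ×ˢ X,
      (6 * K z.1 z.2 * ((6 * K' z.1 z.2) ^ n / ((2 * n).factorial : ℝ))
      + 6 * K' z.1 z.2 * ((6 * K z.1 z.2) ^ n / ((2 * n).factorial : ℝ))))
      (∑ z ∈ X ×ˢ X, (6 * K z.1 z.2 * cc (6 * K' z.1 z.2)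
        + 6 * K' z.1 z.2 * cc (6 * K z.1 z.2))) := by
    apply hasSum_sum
    intro z _
    exact ((cc_hasSum _).mul_left _).add ((cc_hasSum _).mul_left _)
  have h1 := hs.nonneg (by
    intro n
    have e1 := (h.mul (h'.pow n)).nonneg X
    have e2 := (h'.mul (h.pow n)).nonneg X
    have : (∑ z ∈ X ×ˢ X,
      (6 * K z.1 z.2 * ((6 * K' z.1 z.2) ^ n / ((2 * n).factorial : ℝ))
      + 6 * K' z.1 z.2 * ((6 * K z.1 z.2) ^ n / ((2 * n).factorial : ℝ))))
      = (6 ^ (n + 1) / ((2 * n).factorial : ℝ)) * (∑ z ∈ X ×ˢ X, K z.1 z.2 * K' z.1 z.2 ^ n)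
      + (6 ^ (n + 1) / ((2 * n).factorial : ℝ)) * (∑ z ∈ X ×ˢ X, K' z.1 z.2 * K z.1 z.2 ^ n) := by
      rw [Finset.mul_sum, Finset.mul_sum, ← Finset.sum_add_distrib]
      refine Finset.sum_congr rfl fun z _ => ?_
      rw [mul_pow, mul_pow]; ring
    rw [this]
    positivity)
  have h2 := h.nonneg X
  have h3 := h'.nonneg X
  have : ∑ z ∈ X ×ˢ X, ff (6 * K z.1 z.2) (6 * K' z.1 z.2)
    = (∑ z ∈ X ×ˢ X, (6 * K z.1 z.2 * cc (6 * K' z.1 z.2)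
        + 6 * K' z.1 z.2 * cc (6 * K z.1 z.2)))
      + 12 * (∑ z ∈ X ×ˢ X, K z.1 z.2) + 12 * (∑ z ∈ X ×ˢ X, K' z.1 z.2) := by
    rw [Finset.mul_sum, Finset.mul_sum, ← Finset.sum_add_distrib, ← Finset.sum_add_distrib]
    refine Finset.sum_congr rfl fun z _ => ?_
    unfold ff; ring
  rw [this]
  positivity

lemma sum_inv_sq_le (N : ℕ) :
    ∑ n ∈ Finset.range N, 1 / ((n : ℝ) + 1) ^ 2 ≤ 2 - 1 / (N : ℝ) := by
  induction N with
  | zero => norm_num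
  | succ N ih =>
    rw [Finset.sum_range_succ]
    rcases Nat.eq_zero_or_pos N with h0 | h0
    · subst h0; norm_num
    · have hN : (0 : ℝ) < N := by exact_mod_cast h0
      have : 1 / ((N : ℝ) + 1) ^ 2 ≤ 1 / N - 1 / (N + 1) := by
        rw [div_sub_div _ _ (by positivity) (by positivity), div_le_div_iff₀ (by positivity)
          (by positivity)]
        nlinarith
      push_cast
      linarith

lemma level_bound (n : ℕ) : ((n : ℝ) + 1) * Real.exp (-(6 * √n)) ≤ 1 / ((n : ℝ) + 1) ^ 2 := by
  have h1 : (n : ℝ) + 1 ≤ Real.exp (2 * √n) := by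
    have h := Real.add_one_le_exp (√n)
    have h' : (√n : ℝ) ^ 2 = n := Real.sq_sqrt (by positivity)
    have h0 := Real.sqrt_nonneg (n : ℝ)
    calc (n : ℝ) + 1 ≤ (√n + 1) ^ 2 := by nlinarith
      _ ≤ Real.exp (√n) ^ 2 := by gcongr
      _ = _ := by rw [← Real.exp_nat_mul]; norm_num
  have h2 : ((n : ℝ) + 1) ^ 3 ≤ Real.exp (6 * √n) := by
    calc ((n : ℝ) + 1) ^ 3 ≤ Real.exp (2 * √n) ^ 3 := by gcongr
      _ = _ := by rw [← Real.exp_nat_mul]; norm_num; ring_nf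
  rw [Real.exp_neg, ← div_eq_mul_inv, div_le_div_iff₀ (by positivity) (by positivity)]
  nlinarith

lemma geometric {K : Bool → ℕ → ℕ → ℝ} (h : ∀ i, GramK (K i)) (X : Finset ℕ)
    (hX : X.Nonempty) : ∃ (n : ℕ) (i : Bool),
    1 / 28 * Real.exp (-(9 * √n)) * (X.card : ℝ) ^ 2 ≤
      ((X ×ˢ X).filter (fun z => (n : ℝ) - 1 ≤ K i z.1 z.2 ∧ ∀ j, -1 ≤ K j z.1 z.2)).card := by
  classical
  by_contra! hcon
  have hcard : (0 : ℝ) < (X.card : ℝ) ^ 2 := by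
    have := hX.card_pos
    positivity
  set P := X ×ˢ X with hP
  set F : ℕ × ℕ → ℝ := fun z => ff (6 * K true z.1 z.2) (6 * K false z.1 z.2) with hF
  set M : ℕ × ℕ → ℝ := fun z => max (K true z.1 z.2) (K false z.1 z.2) with hM
  set lev : ℕ × ℕ → ℕ := fun z => ⌊M z + 1⌋₊ with hlev
  set good := P.filter (fun z => ∀ j, -1 ≤ K j z.1 z.2) with hgood
  have h0 : 0 ≤ ∑ z ∈ P, F z := ff_sum_nonneg (h true) (h false) X
  have h1 : ∑ z ∈ P, (F z + 6) = ∑ z ∈ P, F z + 6 * (X.card : ℝ) ^ 2 := by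
    rw [Finset.sum_add_distrib]
    simp [hP, Finset.card_product]
    ring
  have h2 : ∑ z ∈ P, (F z + 6) ≤ ∑ z ∈ good, (F z + 6) := by
    rw [← Finset.sum_filter_add_sum_filter_not P (fun z => ∀ j, -1 ≤ K j z.1 z.2)]
    have : ∑ z ∈ P.filter (fun z => ¬ ∀ j, -1 ≤ K j z.1 z.2), (F z + 6) ≤ 0 := by
      apply Finset.sum_nonpos
      intro z hz
      have := (Finset.mem_filter.1 hz).2
      push Not at this
      obtain ⟨j, hj⟩ := this
      cases j
      · have := ff_bad (x := 6 * K false z.1 z.2) (6 * K true z.1 z.2) (by linarith)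
        rw [ff_symm] at this
        simp only [hF]; linarith
      · have := ff_bad (x := 6 * K true z.1 z.2) (6 * K false z.1 z.2) (by linarith)
        simp only [hF]; linarith
    linarith
  set G : ℕ → ℝ := fun n => 42 * ((n : ℝ) + 1) * Real.exp (3 * √n) with hG
  have h3 : ∑ z ∈ good, (F z + 6) ≤ ∑ z ∈ good, G (lev z) := by
    apply Finset.sum_le_sum
    intro z hz
    have hlt : M z + 1 < lev z + 1 := Nat.lt_floor_add_one _
    have a1 : K true z.1 z.2 ≤ M z := le_max_left _ _
    have a2 : K false z.1 z.2 ≤ M z := le_max_right _ _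
    have := ff_good (x := 6 * K true z.1 z.2) (y := 6 * K false z.1 z.2) (n := lev z)
      (by linarith) (by linarith)
    have h1 : 1 ≤ Real.exp (3 * √(lev z)) := Real.one_le_exp (by positivity)
    have h2 : (0 : ℝ) ≤ lev z := by positivity
    simp only [hF, hG]
    nlinarith
  set N := good.sup lev + 1 with hN
  have h4 : ∑ z ∈ good, G (lev z) = ∑ n ∈ Finset.range N,
      ((good.filter (fun z => lev z = n)).card : ℝ) * G n := by
    rw [← Finset.sum_fiberwise_of_maps_to (s := good) (t := Finset.range N) (g := lev)]
    · refine Finset.sum_congr rfl fun n _ => ?_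
      rw [← nsmul_eq_mul, ← Finset.sum_const]
      refine Finset.sum_congr rfl fun z hz => ?_
      rw [(Finset.mem_filter.1 hz).2]
    · intro z hz
      rw [Finset.mem_range, hN]
      exact Nat.lt_succ_of_le (Finset.le_sup hz)
  have h5 : ∀ n ∈ Finset.range N, ((good.filter (fun z => lev z = n)).card : ℝ) * G n
      ≤ 3 * (X.card : ℝ) ^ 2 * (1 / ((n : ℝ) + 1) ^ 2) := by
    intro n _
    have hsub : good.filter (fun z => lev z = n) ⊆
        (P.filter (fun z => (n : ℝ) - 1 ≤ K true z.1 z.2 ∧ ∀ j, -1 ≤ K j z.1 z.2)) ∪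
        (P.filter (fun z => (n : ℝ) - 1 ≤ K false z.1 z.2 ∧ ∀ j, -1 ≤ K j z.1 z.2)) := by
      intro z hz
      obtain ⟨hz1, hz2⟩ := Finset.mem_filter.1 hz
      obtain ⟨hz1, hz3⟩ := Finset.mem_filter.1 hz1
      have hMp : 0 ≤ M z + 1 := by
        have a1 : K true z.1 z.2 ≤ M z := le_max_left _ _
        linarith [hz3 true]
      have : (n : ℝ) ≤ M z + 1 := by
        rw [← hz2]; exact Nat.floor_le hMp
      have : (n : ℝ) - 1 ≤ max (K true z.1 z.2) (K false z.1 z.2) := by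
        simp only [hM] at this; linarith
      rw [Finset.mem_union, Finset.mem_filter, Finset.mem_filter]
      rcases le_max_iff.1 this with h | h
      · exact Or.inl ⟨hz1, h, hz3⟩
      · exact Or.inr ⟨hz1, h, hz3⟩
    have hc : ((good.filter (fun z => lev z = n)).card : ℝ) ≤
        2 * (1 / 28 * Real.exp (-(9 * √n)) * (X.card : ℝ) ^ 2) := by
      have e1 := (Finset.card_le_card hsub).trans (Finset.card_union_le _ _)
      have e2 : ((good.filter (fun z => lev z = n)).card : ℝ) ≤
        ((P.filter (fun z => (n : ℝ) - 1 ≤ K true z.1 z.2 ∧ ∀ j, -1 ≤ K j z.1 z.2)).card : ℝ) +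
        ((P.filter (fun z => (n : ℝ) - 1 ≤ K false z.1 z.2 ∧ ∀ j, -1 ≤ K j z.1 z.2)).card : ℝ) := by
        exact_mod_cast e1
      linarith [hcon n true, hcon n false]
    have hGn : 0 ≤ G n := by simp only [hG]; positivity
    calc _ ≤ 2 * (1 / 28 * Real.exp (-(9 * √n)) * (X.card : ℝ) ^ 2) * G n := by gcongr
      _ = 3 * (X.card : ℝ) ^ 2 * (((n : ℝ) + 1) * Real.exp (-(6 * √n))) := by
        simp only [hG]
        rw [show -(6 * √n) = -(9 * √n) + 3 * √n by ring, Real.exp_add]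
        ring
      _ ≤ _ := by gcongr; exact level_bound n
  have h6 : ∑ z ∈ good, G (lev z) ≤ 3 * (X.card : ℝ) ^ 2 * (2 - 1 / (N : ℝ)) := by
    rw [h4]
    refine (Finset.sum_le_sum h5).trans ?_
    rw [← Finset.mul_sum]
    gcongr
    exact sum_inv_sq_le N
  have hNpos : (0 : ℝ) < 1 / (N : ℝ) := by rw [hN]; positivity
  nlinarith

/-! ### One step of the book algorithm -/

/-- Neighbours of `x` in colour `i` inside `S`. -/
def nbr (c : ℕ → ℕ → Bool) (i : Bool) (x : ℕ) (S : Finset ℕ) : Finset ℕ :=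
  S.filter (fun y => y ≠ x ∧ c x y = i)

lemma mem_nbr {c : ℕ → ℕ → Bool} {i : Bool} {x y : ℕ} {S : Finset ℕ} :
    y ∈ nbr c i x S ↔ y ∈ S ∧ y ≠ x ∧ c x y = i := by
  simp [nbr]

lemma gram_aux (Y : Finset ℕ) (N : ℕ → Finset ℕ) (m : ℕ) (X : Finset ℕ) (α : ℝ) (hα : 0 < α)
    (hm : 0 < m) (hN : ∀ x ∈ X, N x ⊆ Y ∧ (N x).card = m) :
    ∃ K : ℕ → ℕ → ℝ, GramK K ∧ ∀ x ∈ X, ∀ y ∈ X, ∀ l : ℝ, l ≤ K x y →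
      ((m : ℝ) / Y.card + l * α) * m ≤ (N x ∩ N y).card := by
  classical
  by_cases hY : Y.card = 0
  · refine ⟨fun _ _ => 1, GramK.one, ?_⟩
    intro x hx
    exfalso
    have := Finset.card_le_card (hN x hx).1
    rw [(hN x hx).2] at this
    omega
  have hYp : (0 : ℝ) < Y.card := by positivity
  have hmp : (0 : ℝ) < m := by exact_mod_cast hm
  set p : ℝ := (m : ℝ) / Y.card with hp
  have hpY : p * Y.card = m := by rw [hp]; field_simp
  have hαm : 0 < α * m := by positivity
  refine ⟨fun x y => ∑ v : Y, (((if (v : ℕ) ∈ N x then 1 else 0) - p) / √(α * m)) *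
    (((if (v : ℕ) ∈ N y then 1 else 0) - p) / √(α * m)), ⟨Y, inferInstance,
      fun v x => ((if (v : ℕ) ∈ N x then 1 else 0) - p) / √(α * m), fun x y => rfl⟩, ?_⟩
  intro x hx y hy l hl
  have hc : ∀ x ∈ X, ∑ v ∈ Y, (if v ∈ N x then (1 : ℝ) else 0) = m := by
    intro x hx
    rw [Finset.sum_ite_mem, Finset.inter_eq_right.2 (hN x hx).1]
    simp [(hN x hx).2]
  have hcc : ∑ v ∈ Y, (if v ∈ N x then (1 : ℝ) else 0) * (if v ∈ N y then (1 : ℝ) else 0)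
      = (N x ∩ N y).card := by
    have : ∀ v ∈ Y, (if v ∈ N x then (1 : ℝ) else 0) * (if v ∈ N y then (1 : ℝ) else 0)
        = if v ∈ N x ∩ N y then 1 else 0 := by
      intro v _
      by_cases h1 : v ∈ N x <;> by_cases h2 : v ∈ N y <;> simp [h1, h2]
    rw [Finset.sum_congr rfl this, Finset.sum_ite_mem, Finset.inter_eq_right.2
      (Finset.inter_subset_left.trans (hN x hx).1)]
    simp
  have hK : (∑ v : Y, (((if (v : ℕ) ∈ N x then 1 else 0) - p) / √(α * m)) *
    (((if (v : ℕ) ∈ N y then 1 else 0) - p) / √(α * m)))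
      = ((N x ∩ N y).card - p * m) / (α * m) := by
    rw [Finset.sum_coe_sort Y (fun v => (((if (v : ℕ) ∈ N x then 1 else 0) - p) / √(α * m)) *
      (((if (v : ℕ) ∈ N y then 1 else 0) - p) / √(α * m)))]
    have : ∀ v ∈ Y, (((if (v : ℕ) ∈ N x then 1 else 0) - p) / √(α * m)) *
      (((if (v : ℕ) ∈ N y then 1 else 0) - p) / √(α * m)) =
      ((if v ∈ N x then (1 : ℝ) else 0) * (if v ∈ N y then (1 : ℝ) else 0)
        - p * (if v ∈ N x then (1 : ℝ) else 0) - p * (if v ∈ N y then (1 : ℝ) else 0)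
        + p * p) / (α * m) := by
      intro v _
      rw [div_mul_div_comm, Real.mul_self_sqrt hαm.le]
      ring
    rw [Finset.sum_congr rfl this, ← Finset.sum_div, Finset.sum_add_distrib,
      Finset.sum_sub_distrib, Finset.sum_sub_distrib, ← Finset.mul_sum, ← Finset.mul_sum,
      hc x hx, hc y hy, hcc, Finset.sum_const, nsmul_eq_mul]
    congr 1
    have : (Y.card : ℝ) * (p * p) = p * m := by rw [← hpY]; ring
    rw [this]; ring
  simp only [hK] at hl
  rw [le_div_iff₀ hαm] at hl
  nlinarith

lemma step_lemma (c : ℕ → ℕ → Bool) (X : Finset ℕ) (hX : X.Nonempty) (Y : Bool → Finset ℕ)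
    (hY : ∀ i, (Y i).Nonempty) (p α : Bool → ℝ) (hp : ∀ i, 0 < p i) (hα : ∀ i, 0 < α i)
    (hdeg : ∀ x ∈ X, ∀ i, p i * (Y i).card ≤ (nbr c i x (Y i)).card) :
    ∃ x ∈ X, ∃ (l : Bool) (n : ℕ) (X' : Finset ℕ) (Y' : Bool → Finset ℕ), X' ⊆ X ∧
      (∀ i, Y' i ⊆ nbr c i x (Y i)) ∧ (∀ i, p i * (Y i).card ≤ (Y' i).card) ∧
      1 / 28 * Real.exp (-(9 * √n)) * X.card ≤ X'.card ∧
      (∀ y ∈ X', ∀ i, (p i - α i) * (Y' i).card ≤ (nbr c i y (Y' i)).card) ∧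
      (∀ y ∈ X', (p l + (n - 1) * α l) * (Y' l).card ≤ (nbr c l y (Y' l)).card) := by
  classical
  set m : Bool → ℕ := fun i => ⌈p i * (Y i).card⌉₊ with hm
  have hm0 : ∀ i, 0 < m i := by
    intro i
    have := hp i
    have := (hY i).card_pos
    simp only [hm]; rw [Nat.ceil_pos]; positivity
  have hmp : ∀ i, p i * (Y i).card ≤ m i := fun i => Nat.le_ceil _
  have hex : ∀ i x, ∃ N : Finset ℕ, x ∈ X → N ⊆ nbr c i x (Y i) ∧ N.card = m i := by
    intro i x
    by_cases hx : x ∈ X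
    · have : m i ≤ (nbr c i x (Y i)).card := Nat.ceil_le.2 (hdeg x hx i)
      obtain ⟨N, h1, h2⟩ := Finset.exists_subset_card_eq this
      exact ⟨N, fun _ => ⟨h1, h2⟩⟩
    · exact ⟨∅, fun h => absurd h hx⟩
  choose N hN using hex
  have hsub : ∀ i x, nbr c i x (Y i) ⊆ Y i := fun i x => Finset.filter_subset _ _
  have hK : ∀ i, _ := fun i => gram_aux (Y i) (N i) (m i) X (α i) (hα i) (hm0 i)
    (fun x hx => ⟨(hN i x hx).1.trans (hsub i x), (hN i x hx).2⟩)
  choose K hK1 hK2 using hK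
  obtain ⟨n, l, hnl⟩ := geometric hK1 X hX
  have hXp : (0 : ℝ) < X.card := by have := hX.card_pos; positivity
  -- choose the best x
  obtain ⟨x, hx, hxc⟩ : ∃ x ∈ X, 1 / 28 * Real.exp (-(9 * √n)) * X.card ≤
      ((X.filter (fun y => (n : ℝ) - 1 ≤ K l x y ∧ ∀ j, -1 ≤ K j x y)).card : ℝ) := by
    by_contra! hcon
    have e : ((X ×ˢ X).filter (fun z => (n : ℝ) - 1 ≤ K l z.1 z.2 ∧ ∀ j, -1 ≤ K j z.1 z.2)).card
        = ∑ x ∈ X, (X.filter (fun y => (n : ℝ) - 1 ≤ K l x y ∧ ∀ j, -1 ≤ K j x y)).card := by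
      simp only [Finset.card_filter, Finset.sum_product]
    rw [e] at hnl
    push_cast at hnl
    have := Finset.sum_lt_sum_of_nonempty hX hcon
    rw [Finset.sum_const, nsmul_eq_mul] at this
    nlinarith
  have hpm : ∀ i, p i ≤ (m i : ℝ) / (Y i).card := by
    intro i
    have : (0 : ℝ) < (Y i).card := by have := (hY i).card_pos; positivity
    rw [le_div_iff₀ this]; exact hmp i
  refine ⟨x, hx, l, n, _, fun i => N i x, Finset.filter_subset _ _, fun i => (hN i x hx).1,
    fun i => ?_, hxc, ?_, ?_⟩
  · rw [(hN i x hx).2]; exact hmp i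
  · intro y hy i
    obtain ⟨hyX, hy1, hy2⟩ := Finset.mem_filter.1 hy
    have e := hK2 i x hx y hyX (-1) (hy2 i)
    have e2 : ((N i x ∩ N i y).card : ℝ) ≤ (nbr c i y (N i x)).card := by
      norm_cast
      apply Finset.card_le_card
      intro z hz
      obtain ⟨h1, h2⟩ := Finset.mem_inter.1 hz
      exact mem_nbr.2 ⟨h1, (mem_nbr.1 ((hN i y hyX).1 h2)).2⟩
    rw [(hN i x hx).2]
    refine le_trans ?_ (e.trans e2)
    have := hpm i
    gcongr
    linarith
  · intro y hy
    obtain ⟨hyX, hy1, hy2⟩ := Finset.mem_filter.1 hy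
    have e := hK2 l x hx y hyX _ hy1
    have e2 : ((N l x ∩ N l y).card : ℝ) ≤ (nbr c l y (N l x)).card := by
      norm_cast
      apply Finset.card_le_card
      intro z hz
      obtain ⟨h1, h2⟩ := Finset.mem_inter.1 hz
      exact mem_nbr.2 ⟨h1, (mem_nbr.1 ((hN l y hyX).1 h2)).2⟩
    rw [(hN l x hx).2]
    refine le_trans ?_ (e.trans e2)
    have := hpm l
    gcongr

/-! ### The book algorithm -/

/-- Monochromatic cliques. -/
def Mono (c : ℕ → ℕ → Bool) (i : Bool) (A : Finset ℕ) : Prop :=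
  ∀ u ∈ A, ∀ v ∈ A, u ≠ v → c u v = i

lemma boost_ineq {lam w T δ : ℝ} {n : ℕ} (hn : (n : ℝ) - 1 = lam) (hw : 1 ≤ w) (hδ : 0 < δ)
    (hT0 : 0 < T) (hT : 4 * w ^ 2 ≤ T * δ) (h1 : w ^ 2 < lam) (h2 : lam * δ ≤ 4 * T) :
    Real.exp (-(44 / w * T * Real.log (1 + lam / T))) ≤ 1 / 28 * Real.exp (-(9 * √n)) := by
  have hlam : 1 < lam := by nlinarith
  have hw0 : 0 < w := by linarith
  have hs0 : 0 ≤ √lam := Real.sqrt_nonneg _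
  have hsq : √lam ^ 2 = lam := Real.sq_sqrt (by linarith)
  have hsw : w ≤ √lam := Real.le_sqrt_of_sq_le h1.le
  have hn2 : √n ≤ 2 * √lam := by
    apply Real.sqrt_le_iff.2 ⟨by positivity, ?_⟩
    rw [mul_pow, hsq]; linarith
  have hlog : 1 - (1 + lam / T)⁻¹ ≤ Real.log (1 + lam / T) :=
    Real.one_sub_inv_le_log_of_pos (by positivity)
  have hform : 1 - (1 + lam / T)⁻¹ = lam / (T + lam) := by field_simp; ring
  rw [hform] at hlog
  have key : 22 * √lam ≤ 44 / w * T * Real.log (1 + lam / T) := by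
    have hk : w * √lam ≤ 2 * (T * (lam / (T + lam))) := by
      rw [← mul_div_assoc, ← mul_div_assoc, le_div_iff₀ (by positivity)]
      rcases le_or_gt lam T with h | h
      · have : w * √lam ≤ lam := by nlinarith
        nlinarith [mul_nonneg hw0.le hs0]
      · have e : w * √lam ≤ T := by
          apply (sq_le_sq₀ (by positivity) hT0.le).1
          rw [mul_pow, hsq]
          have e1 : w ^ 2 * lam * δ ≤ T ^ 2 * δ := by
            calc w ^ 2 * lam * δ = w ^ 2 * (lam * δ) := by ring
              _ ≤ w ^ 2 * (4 * T) := by gcongr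
              _ = (4 * w ^ 2) * T := by ring
              _ ≤ (T * δ) * T := by gcongr
              _ = _ := by ring
          exact le_of_mul_le_mul_right e1 hδ
        nlinarith [mul_nonneg hw0.le hs0]
    calc 22 * √lam = 22 / w * (w * √lam) := by field_simp
      _ ≤ 22 / w * (2 * (T * (lam / (T + lam)))) := by gcongr
      _ = 44 / w * T * (lam / (T + lam)) := by ring
      _ ≤ _ := by gcongr
  have h28 : (1 : ℝ) / 28 ≥ Real.exp (-4) := by
    rw [Real.exp_neg, one_div]
    apply inv_anti₀ (by norm_num)
    have := Real.exp_one_gt_d9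
    calc (28 : ℝ) ≤ 2.7 ^ 4 := by norm_num
      _ ≤ Real.exp 1 ^ 4 := by gcongr; linarith
      _ = Real.exp 4 := by rw [← Real.exp_nat_mul]; norm_num
  calc _ ≤ Real.exp (-4 + -(9 * √n)) := by
        apply Real.exp_le_exp.2
        have : 1 ≤ √lam := by linarith
        linarith
    _ = Real.exp (-4) * Real.exp (-(9 * √n)) := Real.exp_add _ _
    _ ≤ _ := by gcongr

/-- The invariant of the book algorithm. -/
def BookInv (c : ℕ → ℕ → Bool) (S : Finset ℕ) (T : ℕ) (p δ w : ℝ) (t b : Bool → ℕ) : Prop :=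
  ∃ (X : Finset ℕ) (Y A : Bool → Finset ℕ) (L : Bool → ℝ),
    X ⊆ S ∧ (∀ i, Y i ⊆ S) ∧ (∀ i, A i ⊆ S) ∧ (∀ i, (A i).card = t i) ∧
    (∀ i, Mono c i (A i)) ∧ (∀ i, ∀ a ∈ A i, ∀ x ∈ X, x ≠ a ∧ c a x = i) ∧
    (∀ i, ∀ a ∈ A i, ∀ y ∈ Y i, y ≠ a ∧ c a y = i) ∧
    (∀ i, (p - δ) ^ (t i + b i) * S.card ≤ (Y i).card) ∧
    (∀ i, b i * Real.log (1 + w ^ 2 / T) ≤ L i) ∧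
    S.card * Real.exp (-(23 * w * (t true + t false)) - 44 / w * T * (L true + L false)) ≤ X.card ∧
    (∀ x ∈ X, ∀ i, (p - δ + δ * (1 - 1 / T) ^ (t i) * Real.exp (L i)) * (Y i).card ≤
      (nbr c i x (Y i)).card)

lemma quarter_le (T t : ℕ) (hT : 2 ≤ T) (hTe : Even T) (ht : t ≤ T) :
    (1 : ℝ) / 4 ≤ (1 - 1 / (T : ℝ)) ^ t := by
  have hT' : (2 : ℝ) ≤ T := by exact_mod_cast hT
  have h0 : (0 : ℝ) ≤ 1 - 1 / (T : ℝ) := by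
    rw [sub_nonneg, div_le_one (by linarith)]; linarith
  have h1 : 1 - 1 / (T : ℝ) ≤ 1 := by
    have : 0 ≤ 1 / (T : ℝ) := by positivity
    linarith
  refine le_trans ?_ (pow_le_pow_of_le_one h0 h1 ht)
  obtain ⟨u, hu⟩ := hTe
  have hsq : (1 : ℝ) / 2 ≤ (1 - 1 / (T : ℝ)) ^ u := by
    have := one_add_mul_le_pow (a := -(1 / (T : ℝ))) (by linarith) u
    rw [← sub_eq_add_neg] at this
    refine le_trans (le_of_eq ?_) this
    have hu' : (T : ℝ) = 2 * u := by rw [hu]; push_cast; ring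
    have : (u : ℝ) ≠ 0 := by
      intro h; rw [h] at hu'; linarith
    rw [hu']; field_simp; norm_num
  have : (1 - 1 / (T : ℝ)) ^ T = (1 - 1 / (T : ℝ)) ^ u * (1 - 1 / (T : ℝ)) ^ u := by
    rw [← pow_add, ← hu]
  rw [this]
  nlinarith

lemma nbr_split (c : ℕ → ℕ → Bool) (x : ℕ) (S : Finset ℕ) :
    S.card ≤ (nbr c true x S).card + (nbr c false x S).card + 1 := by
  classical
  have : S ⊆ insert x (nbr c true x S ∪ nbr c false x S) := by
    intro y hy
    by_cases h : y = x
    · simp [h]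
    · cases h' : c x y <;> simp [mem_nbr, hy, h, h']
  calc S.card ≤ _ := Finset.card_le_card this
    _ ≤ _ := Finset.card_insert_le _ _
    _ ≤ _ := by gcongr; exact Finset.card_union_le _ _

lemma book_step (c : ℕ → ℕ → Bool) (hc : ∀ u v, c u v = c v u) (S : Finset ℕ) (T : ℕ)
    (p δ w : ℝ) (hδ : 0 < δ) (hδp : δ < p) (hw : 1 ≤ w) (hT2 : 2 ≤ T) (hTe : Even T)
    (hT : 4 * w ^ 2 ≤ T * δ)
    (hS : Real.exp (46 * w * (T + 1) + 88 * T * Real.log (4 / δ) / w) ≤ S.card)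
    (t b : Bool → ℕ) (ht : ∀ i, t i < T) (h : BookInv c S T p δ w t b) :
    ∃ j, BookInv c S T p δ w (Function.update t j (t j + 1)) b ∨
      BookInv c S T p δ w t (Function.update b j (b j + 1)) := by
  classical
  obtain ⟨X, Y, A, L, hXS, hYS, hAS, hAc, hAm, hAX, hAY, hYc, hbL, hXc, hdeg⟩ := h
  have hw0 : 0 < w := by linarith
  have hT' : (2 : ℝ) ≤ T := by exact_mod_cast hT2
  have hSpos : (0 : ℝ) < S.card := lt_of_lt_of_le (Real.exp_pos _) hS
  have hpδ : 0 < p - δ := by linarith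
  have hXpos : (0 : ℝ) < X.card := lt_of_lt_of_le (by positivity) hXc
  have hXne : X.Nonempty := Finset.card_pos.1 (by exact_mod_cast hXpos)
  have hYpos : ∀ i, (0 : ℝ) < (Y i).card := fun i => lt_of_lt_of_le (by positivity) (hYc i)
  have hYne : ∀ i, (Y i).Nonempty := fun i => Finset.card_pos.1 (by exact_mod_cast hYpos i)
  set q : Bool → ℝ := fun i => δ * (1 - 1 / T) ^ (t i) * Real.exp (L i) with hq
  have hqd : ∀ i, δ / 4 * Real.exp (L i) ≤ q i := by
    intro i
    have := quarter_le T (t i) hT2 hTe (ht i).le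
    simp only [hq]
    gcongr
    nlinarith
  have hL0 : ∀ i, 0 ≤ L i := by
    intro i
    refine le_trans ?_ (hbL i)
    have : 0 ≤ Real.log (1 + w ^ 2 / T) := Real.log_nonneg (by
      have : 0 ≤ w ^ 2 / T := by positivity
      linarith)
    positivity
  have hqd' : ∀ i, δ / 4 ≤ q i := by
    intro i
    refine le_trans ?_ (hqd i)
    have := Real.one_le_exp (hL0 i)
    nlinarith
  have hq0 : ∀ i, 0 < q i := fun i => lt_of_lt_of_le (by positivity) (hqd' i)
  have hdens : ∀ (r : ℝ) (y : ℕ) (i : Bool) (Z : Finset ℕ), (0 : ℝ) < Z.card →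
      r * Z.card ≤ (nbr c i y Z).card → r ≤ 1 := by
    intro r y i Z hZ hr
    have : ((nbr c i y Z).card : ℝ) ≤ Z.card := by
      exact_mod_cast Finset.card_le_card (Finset.filter_subset _ _)
    by_contra! hcon
    nlinarith
  obtain ⟨x0, hx0⟩ := hXne
  have hq1 : ∀ i, q i ≤ 1 := by
    intro i
    have := hdens _ x0 i (Y i) (hYpos i) (hdeg x0 hx0 i)
    simp only [hq]; linarith
  have hLle : ∀ i, L i ≤ Real.log (4 / δ) := by
    intro i
    rw [Real.le_log_iff_exp_le (by positivity), le_div_iff₀ hδ]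
    linarith [hqd i, hq1 i]
  obtain ⟨x, hxX, l, n, X', Y', hX'X, hY'Y, hY'c, hX'c, hX'd, hX'l⟩ :=
    step_lemma c X ⟨x0, hx0⟩ Y hYne (fun i => p - δ + q i) (fun i => q i / T)
      (fun i => by have := hq0 i; linarith) (fun i => by have := hq0 i; positivity)
      (fun x hx i => hdeg x hx i)
  have hY'c' : ∀ i, (p - δ) * (Y i).card ≤ (Y' i).card := by
    intro i
    refine le_trans ?_ (hY'c i)
    have := hq0 i
    gcongr
    linarith
  have hY'pos : ∀ i, (0 : ℝ) < (Y' i).card := fun i => lt_of_lt_of_le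
    (mul_pos hpδ (hYpos i)) (hY'c' i)
  have hY'sub : ∀ i, Y' i ⊆ Y i := fun i => (hY'Y i).trans (Finset.filter_subset _ _)
  rcases le_or_gt ((n : ℝ) - 1) (w ^ 2) with hn | hn
  · skip
    have hn' : √n ≤ 2 * w := by
      apply Real.sqrt_le_iff.2 ⟨by positivity, ?_⟩
      nlinarith
    have he5 : (112 : ℝ) ≤ Real.exp 5 := by
      have := Real.exp_one_gt_d9
      calc (112 : ℝ) ≤ 2.7 ^ 5 := by norm_num
        _ ≤ Real.exp 1 ^ 5 := by gcongr; linarith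
        _ = Real.exp 5 := by rw [← Real.exp_nat_mul]; norm_num
    have hX'1 : 1 / 28 * Real.exp (-(18 * w)) * X.card ≤ X'.card := by
      refine le_trans ?_ hX'c
      gcongr 1 / 28 * ?_ * _
      exact Real.exp_le_exp.2 (by linarith)
    have hXbig : Real.exp (23 * w) ≤ X.card := by
      refine le_trans ?_ hXc
      calc Real.exp (23 * w) ≤ Real.exp ((46 * w * (T + 1) + 88 * T * Real.log (4 / δ) / w)
            + (-(23 * w * (t true + t false)) - 44 / w * T * (L true + L false))) := by
            apply Real.exp_le_exp.2
            have e1 : (t true : ℝ) ≤ T := by exact_mod_cast (ht true).le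
            have e2 : (t false : ℝ) ≤ T := by exact_mod_cast (ht false).le
            have e3 : 44 / w * T * (L true + L false) ≤ 44 / w * T * (2 * Real.log (4 / δ)) := by
              gcongr
              linarith [hLle true, hLle false]
            have e4 : 44 / w * T * (2 * Real.log (4 / δ)) = 88 * T * Real.log (4 / δ) / w := by
              ring
            have e5 : 23 * w * (t true + t false) ≤ 23 * w * (T + T) := by gcongr
            nlinarith
        _ = Real.exp (46 * w * (T + 1) + 88 * T * Real.log (4 / δ) / w) *
            Real.exp (-(23 * w * (t true + t false)) - 44 / w * T * (L true + L false)) :=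
            Real.exp_add _ _
        _ ≤ _ := by gcongr
    have hX'2 : (2 : ℝ) ≤ X'.card := by
      refine le_trans ?_ hX'1
      calc (2 : ℝ) ≤ 1 / 28 * Real.exp 5 := by linarith
        _ ≤ 1 / 28 * Real.exp (-(18 * w) + 23 * w) := by
          gcongr; linarith
        _ = 1 / 28 * Real.exp (-(18 * w)) * Real.exp (23 * w) := by rw [Real.exp_add]; ring
        _ ≤ _ := by gcongr
    obtain ⟨j, hj⟩ : ∃ j, (X'.card : ℝ) / 4 ≤ (nbr c j x X').card := by
      by_contra! hcon
      have e1 := hcon true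
      have e2 := hcon false
      have e3 : (X'.card : ℝ) ≤ (nbr c true x X').card + (nbr c false x X').card + 1 := by
        exact_mod_cast nbr_split c x X'
      linarith
    have hj' : Real.exp (-(23 * w)) * X.card ≤ (nbr c j x X').card := by
      refine le_trans ?_ hj
      have : Real.exp (-(23 * w)) ≤ 1 / 112 * Real.exp (-(18 * w)) := by
        calc Real.exp (-(23 * w)) ≤ Real.exp (-5 + -(18 * w)) := by
              apply Real.exp_le_exp.2; linarith
          _ = (Real.exp 5)⁻¹ * Real.exp (-(18 * w)) := by rw [Real.exp_add, Real.exp_neg]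
          _ ≤ _ := by
            gcongr
            rw [one_div]
            exact inv_anti₀ (by norm_num) he5
      have := mul_le_mul_of_nonneg_right this hXpos.le
      linarith
    have hnX' : nbr c j x X' ⊆ X' := Finset.filter_subset _ _
    have hxA : x ∉ A j := fun hx => (hAX j x hx x hxX).1 rfl
    refine ⟨j, Or.inl ⟨nbr c j x X', Function.update Y j (Y' j),
      Function.update A j (insert x (A j)), L, (hnX'.trans hX'X).trans hXS, ?_, ?_, ?_, ?_, ?_, ?_,
      ?_, hbL, ?_, ?_⟩⟩
    · intro i
      by_cases hi : i = j
      · subst hi; simp only [Function.update_self]; exact (hY'sub i).trans (hYS i)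
      · simp only [Function.update_of_ne hi]; exact hYS i
    · intro i
      by_cases hi : i = j
      · subst hi; simp only [Function.update_self]
        exact Finset.insert_subset (hXS hxX) (hAS i)
      · simp only [Function.update_of_ne hi]; exact hAS i
    · intro i
      by_cases hi : i = j
      · subst hi; simp only [Function.update_self]
        rw [Finset.card_insert_of_notMem hxA, hAc]
      · simp only [Function.update_of_ne hi]; exact hAc i
    · intro i
      by_cases hi : i = j
      · subst hi; simp only [Function.update_self]
        intro u hu v hv huv
        rw [Finset.mem_insert] at hu hv
        rcases hu with rfl | hu
        · rcases hv with rfl | hv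
          · exact absurd rfl huv
          · rw [hc]; exact (hAX i v hv u hxX).2
        · rcases hv with rfl | hv
          · exact (hAX i u hu v hxX).2
          · exact hAm i u hu v hv huv
      · simp only [Function.update_of_ne hi]; exact hAm i
    · intro i
      by_cases hi : i = j
      · subst hi; simp only [Function.update_self]
        intro a ha y hy
        rw [Finset.mem_insert] at ha
        rcases ha with rfl | ha
        · exact (mem_nbr.1 hy).2
        · exact hAX i a ha y (hX'X (hnX' hy))
      · simp only [Function.update_of_ne hi]
        exact fun a ha y hy => hAX i a ha y (hX'X (hnX' hy))
    · intro i
      by_cases hi : i = j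
      · subst hi; simp only [Function.update_self]
        intro a ha y hy
        rw [Finset.mem_insert] at ha
        rcases ha with rfl | ha
        · exact (mem_nbr.1 (hY'Y i hy)).2
        · exact hAY i a ha y (hY'sub i hy)
      · simp only [Function.update_of_ne hi]; exact hAY i
    · intro i
      by_cases hi : i = j
      · subst hi; simp only [Function.update_self]
        refine le_trans ?_ (hY'c' i)
        rw [show t i + 1 + b i = (t i + b i) + 1 by ring, pow_succ]
        have := mul_le_mul_of_nonneg_left (hYc i) hpδ.le
        linarith
      · simp only [Function.update_of_ne hi]; exact hYc i
    · refine le_trans ?_ hj'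
      have hsum : ((Function.update t j (t j + 1) true : ℕ) : ℝ) +
          ((Function.update t j (t j + 1) false : ℕ) : ℝ) = t true + t false + 1 := by
        cases j <;> simp <;> ring
      rw [hsum]
      have := mul_le_mul_of_nonneg_left hXc (Real.exp_pos (-(23 * w))).le
      refine le_trans (le_of_eq ?_) this
      rw [mul_left_comm, ← Real.exp_add]
      congr 2
      ring
    · intro y hy i
      by_cases hi : i = j
      · subst hi; simp only [Function.update_self]
        refine le_trans (le_of_eq ?_) (hX'd y (hnX' hy) i)
        simp only [hq]
        rw [pow_succ]
        ring
      · simp only [Function.update_of_ne hi]; exact hdeg y (hX'X (hnX' hy)) i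
  · skip
    have hlam0 : 0 < (n : ℝ) - 1 := by nlinarith
    have hfac : 0 < 1 + ((n : ℝ) - 1) / T := by positivity
    have hX'pos : (0 : ℝ) < X'.card := lt_of_lt_of_le (by positivity) hX'c
    obtain ⟨y0, hy0⟩ := Finset.card_pos.1 (show 0 < X'.card by exact_mod_cast hX'pos)
    have hup : ((n : ℝ) - 1) * δ ≤ 4 * T := by
      have e := hdens _ y0 l (Y' l) (hY'pos l) (hX'l y0 hy0)
      have e1 : ((n : ℝ) - 1) * (q l / T) ≤ 1 := by
        have := hq0 l
        linarith
      have e2 : ((n : ℝ) - 1) * q l ≤ T := by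
        rwa [← mul_div_assoc, div_le_one (by linarith)] at e1
      nlinarith [hqd' l]
    have hb := boost_ineq (n := n) rfl hw hδ (by linarith : (0 : ℝ) < T) hT hn hup
    refine ⟨l, Or.inr ⟨X', Function.update Y l (Y' l), A,
      Function.update L l (L l + Real.log (1 + (n - 1) / T)), hX'X.trans hXS, ?_, hAS, hAc, hAm,
      fun i a ha x hx => hAX i a ha x (hX'X hx), ?_, ?_, ?_, ?_, ?_⟩⟩
    · intro i
      by_cases hi : i = l
      · subst hi; simp only [Function.update_self]; exact (hY'sub i).trans (hYS i)
      · simp only [Function.update_of_ne hi]; exact hYS i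
    · intro i
      by_cases hi : i = l
      · subst hi; simp only [Function.update_self]
        exact fun a ha y hy => hAY i a ha y (hY'sub i hy)
      · simp only [Function.update_of_ne hi]; exact hAY i
    · intro i
      by_cases hi : i = l
      · subst hi; simp only [Function.update_self]
        refine le_trans ?_ (hY'c' i)
        rw [← add_assoc, pow_succ]
        have := mul_le_mul_of_nonneg_left (hYc i) hpδ.le
        linarith
      · simp only [Function.update_of_ne hi]; exact hYc i
    · intro i
      by_cases hi : i = l
      · subst hi; simp only [Function.update_self]
        have : Real.log (1 + w ^ 2 / T) ≤ Real.log (1 + (n - 1) / T) := by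
          apply Real.log_le_log (by positivity)
          gcongr
        push_cast
        linarith [hbL i]
      · simp only [Function.update_of_ne hi]; exact hbL i
    · refine le_trans ?_ hX'c
      have hsum : Function.update L l (L l + Real.log (1 + (n - 1) / T)) true +
          Function.update L l (L l + Real.log (1 + (n - 1) / T)) false
          = L true + L false + Real.log (1 + (n - 1) / T) := by
        cases l <;> simp <;> ring
      rw [hsum]
      calc _ = Real.exp (-(44 / w * T * Real.log (1 + (n - 1) / T))) * (S.card *
            Real.exp (-(23 * w * (t true + t false)) - 44 / w * T * (L true + L false))) := by
            rw [mul_left_comm, ← Real.exp_add]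
            congr 2
            ring
        _ ≤ _ := by gcongr
    · intro y hy i
      by_cases hi : i = l
      · subst hi; simp only [Function.update_self]
        refine le_trans (le_of_eq ?_) (hX'l y hy)
        rw [Real.exp_add, Real.exp_log hfac]
        simp only [hq]
        ring
      · simp only [Function.update_of_ne hi]; exact hdeg y (hX'X hy) i

lemma book_bound (c : ℕ → ℕ → Bool) (S : Finset ℕ) (T : ℕ)
    (p δ w : ℝ) (hδ : 0 < δ) (hδp : δ < p) (hw : 1 ≤ w) (hT2 : 2 ≤ T) (hTe : Even T)
    (hT : 4 * w ^ 2 ≤ T * δ) (hδ1 : δ ≤ 1) (hS : 0 < S.card)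
    (t b : Bool → ℕ) (ht : ∀ i, t i ≤ T) (h : BookInv c S T p δ w t b) (i : Bool) :
    (b i : ℝ) ≤ 2 * T * Real.log (4 / δ) / w ^ 2 := by
  obtain ⟨X, Y, A, L, hXS, hYS, hAS, hAc, hAm, hAX, hAY, hYc, hbL, hXc, hdeg⟩ := h
  have hw0 : 0 < w := by linarith
  have hT' : (2 : ℝ) ≤ T := by exact_mod_cast hT2
  have hSpos : (0 : ℝ) < S.card := by exact_mod_cast hS
  have hpδ : 0 < p - δ := by linarith
  have hXpos : (0 : ℝ) < X.card := lt_of_lt_of_le (by positivity) hXc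
  obtain ⟨x, hx⟩ : X.Nonempty := Finset.card_pos.1 (by exact_mod_cast hXpos)
  have hYpos : (0 : ℝ) < (Y i).card := lt_of_lt_of_le (by positivity) (hYc i)
  have hd := hdeg x hx i
  have hle : ((nbr c i x (Y i)).card : ℝ) ≤ (Y i).card := by
    exact_mod_cast Finset.card_le_card (Finset.filter_subset _ _)
  have hd1 : p - δ + δ * (1 - 1 / T) ^ (t i) * Real.exp (L i) ≤ 1 := by
    by_contra! hcon
    nlinarith
  have hL : L i ≤ Real.log (4 / δ) := by
    rw [Real.le_log_iff_exp_le (by positivity), le_div_iff₀ hδ]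
    have h4 := quarter_le T (t i) hT2 hTe (ht i)
    have : δ * (1 / 4) * Real.exp (L i) ≤ δ * (1 - 1 / T) ^ (t i) * Real.exp (L i) := by gcongr
    linarith
  have hlog : w ^ 2 / (2 * T) ≤ Real.log (1 + w ^ 2 / T) := by
    have e : 1 - (1 + w ^ 2 / T)⁻¹ ≤ Real.log (1 + w ^ 2 / T) :=
      Real.one_sub_inv_le_log_of_pos (by positivity)
    have hform : 1 - (1 + w ^ 2 / T)⁻¹ = w ^ 2 / (T + w ^ 2) := by field_simp; ring
    rw [hform] at e
    refine le_trans ?_ e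
    have : w ^ 2 ≤ T := by nlinarith
    gcongr
    linarith
  have h1 := hbL i
  have h2 : (b i : ℝ) * (w ^ 2 / (2 * T)) ≤ Real.log (4 / δ) := by
    refine le_trans ?_ (h1.trans hL)
    gcongr
  rw [le_div_iff₀ (by positivity)]
  rw [← mul_div_assoc, div_le_iff₀ (by positivity)] at h2
  linarith

lemma book_lemma (c : ℕ → ℕ → Bool) (hc : ∀ u v, c u v = c v u) (S : Finset ℕ) (T : ℕ)
    (p δ w : ℝ) (hδ : 0 < δ) (hδp : δ < p) (hw : 1 ≤ w) (hT2 : 2 ≤ T) (hTe : Even T)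
    (hT : 4 * w ^ 2 ≤ T * δ) (hδ1 : δ ≤ 1)
    (hS : Real.exp (46 * w * (T + 1) + 88 * T * Real.log (4 / δ) / w) ≤ S.card)
    (hdeg : ∀ x ∈ S, ∀ i, p * S.card ≤ (nbr c i x S).card) :
    ∃ (i : Bool) (A Y : Finset ℕ) (b : ℕ), A ⊆ S ∧ Y ⊆ S ∧ A.card = T ∧ Mono c i A ∧
      (∀ a ∈ A, ∀ y ∈ Y, y ≠ a ∧ c a y = i) ∧ (p - δ) ^ (T + b) * S.card ≤ Y.card ∧
      (b : ℝ) ≤ 2 * T * Real.log (4 / δ) / w ^ 2 := by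
  classical
  have hSpos : (0 : ℝ) < S.card := lt_of_lt_of_le (Real.exp_pos _) hS
  have hS0 : 0 < S.card := by exact_mod_cast hSpos
  have claim : ∀ F : ℕ, (∃ t b, BookInv c S T p δ w t b ∧ (∀ i, t i ≤ T) ∧ ∃ j, t j = T) ∨
      ∃ t b, BookInv c S T p δ w t b ∧ (∀ i, t i < T) ∧
        t true + t false + b true + b false = F := by
    intro F
    induction F with
    | zero =>
      refine Or.inr ⟨fun _ => 0, fun _ => 0, ⟨S, fun _ => S, fun _ => ∅, fun _ => 0, ?_⟩, ?_, rfl⟩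
      · refine ⟨subset_rfl, fun _ => subset_rfl, fun _ => by simp, fun _ => by simp,
          fun _ => by simp [Mono], fun _ => by simp, fun _ => by simp, fun _ => by simp,
          fun _ => by simp, by simp, ?_⟩
        intro x hx i
        simpa using hdeg x hx i
      · intro i; simp only; omega
    | succ F ih =>
      rcases ih with ih | ⟨t, b, hI, ht, hF⟩
      · exact Or.inl ih
      · obtain ⟨j, hj | hj⟩ := book_step c hc S T p δ w hδ hδp hw hT2 hTe hT hS t b ht hI
        · by_cases hjT : t j + 1 = T
          · refine Or.inl ⟨_, _, hj, ?_, j, by simpa using hjT⟩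
            intro i
            by_cases hi : i = j
            · subst hi; simp [hjT]
            · simp only [Function.update_of_ne hi]; exact (ht i).le
          · refine Or.inr ⟨_, _, hj, ?_, ?_⟩
            · intro i
              have := ht i
              by_cases hi : i = j
              · subst hi; simp only [Function.update_self]; omega
              · simp only [Function.update_of_ne hi]; exact ht i
            · cases j <;> simp <;> omega
        · refine Or.inr ⟨_, _, hj, ht, ?_⟩
          cases j <;> simp <;> omega
  set Bd := 2 * T * Real.log (4 / δ) / w ^ 2 with hBd
  rcases claim (2 * T + 2 * ⌈Bd⌉₊ + 1) with ⟨t, b, hI, ht, j, hj⟩ | ⟨t, b, hI, ht, hF⟩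
  · have hb := book_bound c S T p δ w hδ hδp hw hT2 hTe hT hδ1 hS0 t b ht hI j
    obtain ⟨X, Y, A, L, hXS, hYS, hAS, hAc, hAm, hAX, hAY, hYc, hbL, hXc, hdeg⟩ := hI
    refine ⟨j, A j, Y j, b j, hAS j, hYS j, (hAc j).trans hj, hAm j, hAY j, ?_, hb⟩
    rw [← hj]; exact hYc j
  · exfalso
    have hb : ∀ i, b i ≤ ⌈Bd⌉₊ := by
      intro i
      have := book_bound c S T p δ w hδ hδp hw hT2 hTe hT hδ1 hS0 t b (fun i => (ht i).le) hI i
      exact (Nat.cast_le (α := ℝ)).1 (this.trans (Nat.le_ceil _))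
    have := hb true
    have := hb false
    have := ht true
    have := ht false
    omega

/-! ### Ramsey bounds -/

/-- A set which contains a clique of size `k i` in some colour `i`. -/
def Forced (c : ℕ → ℕ → Bool) (k : Bool → ℕ) (S : Finset ℕ) : Prop :=
  ∃ i, ∃ A ⊆ S, A.card = k i ∧ Mono c i A

lemma Forced.mono {c : ℕ → ℕ → Bool} {k k' : Bool → ℕ} {S : Finset ℕ} (h : Forced c k S)
    (hk : ∀ i, k' i ≤ k i) : Forced c k' S := by
  obtain ⟨i, A, hA, hc, hm⟩ := h
  obtain ⟨B, hB, hBc⟩ := Finset.exists_subset_card_eq (hc ▸ hk i)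
  exact ⟨i, B, hB.trans hA, hBc, fun u hu v hv => hm u (hB hu) v (hB hv)⟩

lemma forced_extend {c : ℕ → ℕ → Bool} (hc : ∀ u v, c u v = c v u) {k : Bool → ℕ}
    {S A Y : Finset ℕ} {i : Bool} (hA : A ⊆ S) (hY : Y ⊆ S) (hm : Mono c i A)
    (hAY : ∀ a ∈ A, ∀ y ∈ Y, y ≠ a ∧ c a y = i) (hAk : A.card ≤ k i)
    (h : Forced c (Function.update k i (k i - A.card)) Y) : Forced c k S := by
  classical
  obtain ⟨j, B, hB, hBc, hBm⟩ := h
  by_cases hj : j = i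
  · subst hj
    simp only [Function.update_self] at hBc
    refine ⟨j, A ∪ B, Finset.union_subset hA (hB.trans hY), ?_, ?_⟩
    · rw [Finset.card_union_of_disjoint, hBc]
      · omega
      · rw [Finset.disjoint_left]
        intro a ha hb
        exact (hAY a ha a (hB hb)).1 rfl
    · intro u hu v hv huv
      rw [Finset.mem_union] at hu hv
      rcases hu with hu | hu <;> rcases hv with hv | hv
      · exact hm u hu v hv huv
      · exact (hAY u hu v (hB hv)).2
      · rw [hc]; exact (hAY v hv u (hB hu)).2
      · exact hBm u hu v hv huv
  · simp only [Function.update_of_ne hj] at hBc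
    exact ⟨j, B, hB.trans hY, hBc, hBm⟩

lemma forced_vertex {c : ℕ → ℕ → Bool} (hc : ∀ u v, c u v = c v u) {k : Bool → ℕ}
    {S : Finset ℕ} {v : ℕ} {i : Bool} (hv : v ∈ S) (hk : 1 ≤ k i)
    (h : Forced c (Function.update k i (k i - 1)) (nbr c i v S)) : Forced c k S := by
  refine forced_extend hc (A := {v}) (Y := nbr c i v S) (i := i) (by simpa using hv)
    (Finset.filter_subset _ _) ?_ ?_ (by simpa using hk) (by simpa using h)
  · intro a ha b hb hab
    simp at ha hb; omega
  · intro a ha y hy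
    simp at ha; subst ha
    exact (mem_nbr.1 hy).2

lemma forced_ES {c : ℕ → ℕ → Bool} (hc : ∀ u v, c u v = c v u) (s : ℕ) : ∀ (k : Bool → ℕ)
    (S : Finset ℕ), k true + k false = s → s.choose (k true) ≤ S.card → Forced c k S := by
  induction s with
  | zero =>
    intro k S hk _
    exact ⟨true, ∅, by simp, by simp; omega, by simp [Mono]⟩
  | succ s ih =>
    intro k S hk hS
    by_cases h0 : k true = 0
    · exact ⟨true, ∅, by simp, by simp; omega, by simp [Mono]⟩
    by_cases h1 : k false = 0
    · exact ⟨false, ∅, by simp, by simp; omega, by simp [Mono]⟩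
    obtain ⟨a, ha⟩ := Nat.exists_eq_succ_of_ne_zero h0
    have hpos : 0 < S.card := lt_of_lt_of_le (Nat.choose_pos (by omega)) hS
    obtain ⟨v, hv⟩ := Finset.card_pos.1 hpos
    rw [ha, Nat.succ_eq_add_one, Nat.choose_succ_succ, Nat.succ_eq_add_one] at hS
    have hsp := nbr_split c v S
    by_cases h : s.choose a ≤ (nbr c true v S).card
    · refine forced_vertex hc (i := true) hv (by omega) (ih _ _ ?_ ?_)
      · simp; omega
      · simpa [ha] using h
    · refine forced_vertex hc (i := false) hv (by omega) (ih _ _ ?_ ?_)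
      · simp; omega
      · simp [ha]; omega

lemma choose_le_exp (s k : ℕ) (hs : 0 < s) (hk : k ≤ s) :
    (s.choose k : ℝ) ≤ 2 ^ s * Real.exp (-((2 * (k : ℝ) - s) ^ 2 / (2 * s))) := by
  have hs' : (0 : ℝ) < s := by exact_mod_cast hs
  set θ : ℝ := (2 * (k : ℝ) - s) / s with hθ
  have h1 : Real.exp θ ^ k * Real.exp (-θ) ^ (s - k) * (s.choose k : ℝ)
      ≤ (Real.exp θ + Real.exp (-θ)) ^ s := by
    rw [add_pow]
    exact Finset.single_le_sum (f := fun m => Real.exp θ ^ m * Real.exp (-θ) ^ (s - m) *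
      (s.choose m : ℝ)) (fun m _ => by positivity) (Finset.mem_range.2 (by omega))
  have h2 : Real.exp θ + Real.exp (-θ) ≤ 2 * Real.exp (θ ^ 2 / 2) := by
    have := Real.cosh_le_exp_half_sq θ
    rw [Real.cosh_eq] at this
    linarith
  have h3 : (Real.exp θ + Real.exp (-θ)) ^ s ≤ 2 ^ s * Real.exp (s * (θ ^ 2 / 2)) := by
    calc _ ≤ (2 * Real.exp (θ ^ 2 / 2)) ^ s := by gcongr
      _ = _ := by rw [mul_pow, ← Real.exp_nat_mul]
  have h4 : Real.exp θ ^ k * Real.exp (-θ) ^ (s - k) = Real.exp (θ * (2 * k - s)) := by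
    rw [← Real.exp_nat_mul, ← Real.exp_nat_mul, ← Real.exp_add, Nat.cast_sub hk]
    congr 1; ring
  rw [h4] at h1
  have h5 := h1.trans h3
  have h6 : Real.exp (s * (θ ^ 2 / 2)) = Real.exp (θ * (2 * k - s)) *
      Real.exp (-((2 * (k : ℝ) - s) ^ 2 / (2 * s))) := by
    rw [← Real.exp_add]
    congr 1
    rw [hθ]; field_simp; ring
  rw [h6] at h5
  have hp := Real.exp_pos (θ * (2 * k - s))
  refine le_of_mul_le_mul_left ?_ hp
  linarith

lemma forced_gauss {c : ℕ → ℕ → Bool} (hc : ∀ u v, c u v = c v u) (k : Bool → ℕ)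
    (S : Finset ℕ) (hk : 0 < k true + k false)
    (hS : 2 ^ (k true + k false) * Real.exp (-(((k true : ℝ) - k false) ^ 2 /
      (2 * (k true + k false : ℕ)))) ≤ S.card) : Forced c k S := by
  refine forced_ES hc _ k S rfl ?_
  have := choose_le_exp (k true + k false) (k true) hk (by omega)
  rw [show (2 * (k true : ℝ) - (k true + k false : ℕ)) = (k true : ℝ) - k false by
    push_cast; ring] at this
  exact_mod_cast this.trans hS

/-- The final numerical comparison. -/
lemma num_aux {η M n r b : ℝ} (hM : M = 2 ^ 40) (hη : η = 1 / 2 ^ 47) (hn : 0 ≤ n) (hr : r ≤ n)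
    (hb : b ≤ 2 * (4 * n) * Real.log (4 / η) / (2 ^ 25) ^ 2) :
    b + 12 * η * (4 * n + b) + 2 * η * r ≤ 9 * n / (4 * M) := by
  have hl : Real.log (4 / η) ≤ 34 := by
    rw [hη, show (4 : ℝ) / (1 / 2 ^ 47) = 2 ^ 49 by norm_num, Real.log_pow]
    have := Real.log_two_lt_d9
    norm_num at this ⊢
    linarith
  have hb' : b ≤ 2 * (4 * n) * 34 / (2 ^ 25) ^ 2 := by
    refine hb.trans ?_
    gcongr
  rw [hM, hη]
  norm_num at hb' ⊢
  linarith

lemma chase {c : ℕ → ℕ → Bool} (hc : ∀ u v, c u v = c v u) (M n : ℕ) (hM : M = 2 ^ 40)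
    (hn : 2 ^ 97 ≤ n) (η : ℝ) (hη : η = 1 / 2 ^ 47) (r : ℕ) : r ≤ n → ∀ (k : Bool → ℕ)
    (S : Finset ℕ), k true + k false + n = 2 * (M * n) + r → k true ≤ k false + (n - r) →
    k false ≤ k true + (n - r) →
    2 ^ (k true + k false) * ((1 + 2 * η) ^ r)⁻¹ ≤ S.card → Forced c k S := by
  have hη0 : 0 < η := by rw [hη]; positivity
  have hMn : M * n = 1099511627776 * n := by rw [hM]; norm_num
  induction r with
  | zero =>
    intro _ k S hsum h1 h2 hS
    refine forced_gauss hc k S (by omega) (le_trans ?_ hS)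
    rw [pow_zero, inv_one]
    gcongr
    rw [Real.exp_le_one_iff, neg_nonpos]
    positivity
  | succ r ih =>
    intro hr k S hsum h1 h2 hS
    have hkbig : ∀ i, 4 * n + n ≤ k i := by intro i; cases i <;> omega
    by_cases hv : ∃ v ∈ S, ∃ i, (1 / 2 + η) * S.card ≤ (nbr c i v S).card
    · obtain ⟨v, hv, i, hvi⟩ := hv
      have hki := hkbig i
      have hupd : Function.update k i (k i - 1) true + Function.update k i (k i - 1) false + 1
          = k true + k false := by
        cases i <;> simp <;> omega
      refine forced_vertex hc (i := i) hv (by omega) (ih (by omega) _ _ (by omega) ?_ ?_ ?_)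
      · cases i <;> simp <;> omega
      · cases i <;> simp <;> omega
      · refine le_trans ?_ hvi
        have := mul_le_mul_of_nonneg_left hS (by positivity : 0 ≤ 1 / 2 + η)
        refine le_trans (le_of_eq ?_) this
        rw [← hupd, pow_succ, pow_succ]
        field_simp
    · push Not at hv
      set s := k true + k false with hs
      have hn1 : 1 ≤ n := by omega
      have hn' : (2 : ℝ) ^ 97 ≤ n := by exact_mod_cast hn
      have hn2 : (158456325028528675187087900672 : ℝ) ≤ n := le_trans (by norm_num) hn'
      have hn0 : (0 : ℝ) < n := by linarith [show (0 : ℝ) < 2 ^ 97 by positivity]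
      have hfac : (1 + 2 * η) ^ (r + 1) ≤ Real.exp (2 * η * (r + 1 : ℕ)) := by
        rw [mul_comm (2 * η), Real.exp_nat_mul]
        gcongr
        linarith [Real.add_one_le_exp (2 * η)]
      have hfac' : Real.exp (-(2 * η * (r + 1 : ℕ))) ≤ ((1 + 2 * η) ^ (r + 1))⁻¹ := by
        rw [Real.exp_neg]
        exact inv_anti₀ (by positivity) hfac
      have hrn : ((r + 1 : ℕ) : ℝ) ≤ n := by exact_mod_cast hr
      -- size of S
      have hSbig : Real.exp (2 ^ 34 * n) ≤ S.card := by
        refine le_trans ?_ hS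
        have e2 : Real.exp (1 / 2) ≤ 2 := by
          have h := Real.exp_one_lt_d9
          have h' : Real.exp (1 / 2) ^ 2 = Real.exp 1 := by
            rw [← Real.exp_nat_mul]; norm_num
          nlinarith [Real.exp_pos (1 / 2)]
        calc Real.exp (2 ^ 34 * n) ≤ Real.exp ((s : ℕ) * (1 / 2) + -(2 * η * (r + 1 : ℕ))) := by
              apply Real.exp_le_exp.2
              have hsn : 1099511627776 * n ≤ s := by omega
              have hsn' : (1099511627776 : ℝ) * n ≤ s := by exact_mod_cast hsn
              have : 2 * η * (r + 1 : ℕ) ≤ 2 * 1 * n := by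
                gcongr
                rw [hη]; norm_num
              norm_num
              norm_num at this
              linarith
          _ = Real.exp (1 / 2) ^ s * Real.exp (-(2 * η * (r + 1 : ℕ))) := by
              rw [Real.exp_add, Real.exp_nat_mul]
          _ ≤ _ := by gcongr
      have hSη : 1 ≤ η * S.card := by
        have e1 : (2 : ℝ) ^ 34 * n ≤ S.card := by
          linarith [Real.add_one_le_exp ((2 : ℝ) ^ 34 * n)]
        have e2 : (2 : ℝ) ^ 47 ≤ S.card := by
          refine le_trans ?_ e1
          norm_num
          linarith
        rw [hη, div_mul_eq_mul_div, one_mul, le_div_iff₀ (by positivity)]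
        linarith
      have hdeg : ∀ x ∈ S, ∀ i, (1 / 2 - 2 * η) * S.card ≤ (nbr c i x S).card := by
        intro x hx i
        have e3 : (S.card : ℝ) ≤ (nbr c true x S).card + (nbr c false x S).card + 1 := by
          exact_mod_cast nbr_split c x S
        have e1 := hv x hx true
        have e2 := hv x hx false
        cases i <;> linarith
      have hl : Real.log (4 / η) ≤ 34 := by
        rw [hη, show (4 : ℝ) / (1 / 2 ^ 47) = 2 ^ 49 by norm_num, Real.log_pow]
        have := Real.log_two_lt_d9
        norm_num at this ⊢
        linarith
      obtain ⟨i, A, Y, b, hAS, hYS, hAc, hAm, hAY, hYc, hb⟩ :=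
        book_lemma c hc S (4 * n) (1 / 2 - 2 * η) η (2 ^ 25) hη0 (by rw [hη]; norm_num)
          (by norm_num) (by omega) ⟨2 * n, by ring⟩
          (by rw [hη]; push_cast; norm_num; linarith)
          (by rw [hη]; norm_num)
          (by
            refine le_trans (Real.exp_le_exp.2 ?_) hSbig
            push_cast
            have : 88 * (4 * (n : ℝ)) * Real.log (4 / η) / 2 ^ 25
                ≤ 88 * (4 * (n : ℝ)) * 34 / 2 ^ 25 := by gcongr
            refine le_trans (add_le_add_right this _) ?_
            norm_num
            linarith) hdeg
      have hki := hkbig i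
      have hupd : Function.update k i (k i - A.card) true
          + Function.update k i (k i - A.card) false + 4 * n = s := by
        rw [hAc]
        cases i <;> simp <;> omega
      have hYbig : (2 : ℝ) ^ (s - 4 * n) * Real.exp (-(9 * n / (4 * (M : ℝ)))) ≤ Y.card := by
        have hnum := num_aux (M := (M : ℝ)) (by rw [hM]; norm_num) hη hn0.le hrn
          (b := (b : ℝ)) (by push_cast at hb; exact hb)
        have e1 : Real.exp (-(12 * η)) ≤ 1 - 6 * η := by
          have h12 : 0 ≤ 12 * η := by positivity
          have : Real.exp (12 * η) ≥ 1 + 12 * η := by linarith [Real.add_one_le_exp (12 * η)]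
          rw [Real.exp_neg]
          calc (Real.exp (12 * η))⁻¹ ≤ (1 + 12 * η)⁻¹ := inv_anti₀ (by positivity) this
            _ ≤ 1 - 6 * η := by
              rw [inv_le_iff_one_le_mul₀ (by positivity), hη]
              norm_num
        have e2 : Real.exp (-1) ≤ 1 / 2 := by
          rw [Real.exp_neg, one_div]
          exact inv_anti₀ (by norm_num) (by linarith [Real.exp_one_gt_d9])
        have e3 : (1 / 2 - 2 * η - η) ^ (4 * n + b) =
            (1 / 2) ^ (4 * n) * (1 / 2) ^ b * (1 - 6 * η) ^ (4 * n + b) := by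
          rw [← pow_add, ← mul_pow]
          congr 1; ring
        have e4 : (2 : ℝ) ^ s = 2 ^ (s - 4 * n) * 2 ^ (4 * n) := by
          rw [← pow_add]; congr 1; omega
        refine le_trans ?_ hYc
        have e5 : Real.exp (-(9 * n / (4 * (M : ℝ)))) ≤ Real.exp (-1) ^ b *
            Real.exp (-(12 * η)) ^ (4 * n + b) * Real.exp (-(2 * η * (r + 1 : ℕ))) := by
          rw [← Real.exp_nat_mul, ← Real.exp_nat_mul, ← Real.exp_add, ← Real.exp_add]
          apply Real.exp_le_exp.2
          push_cast
          push_cast at hnum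
          linarith
        calc _ ≤ (2 : ℝ) ^ (s - 4 * n) * ((1 / 2) ^ b *
              (1 - 6 * η) ^ (4 * n + b) * ((1 + 2 * η) ^ (r + 1))⁻¹) := by
              gcongr
              refine e5.trans ?_
              have h6 : 0 ≤ 1 - 6 * η := (Real.exp_pos _).le.trans e1
              exact mul_le_mul (mul_le_mul (pow_le_pow_left₀ (Real.exp_pos _).le e2 _)
                (pow_le_pow_left₀ (Real.exp_pos _).le e1 _) (by positivity) (by positivity))
                hfac' (Real.exp_pos _).le (mul_nonneg (by positivity) (pow_nonneg h6 _))
          _ = (1 / 2 - 2 * η - η) ^ (4 * n + b) * (2 ^ s * ((1 + 2 * η) ^ (r + 1))⁻¹) := by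
              rw [e3, e4, one_div_pow 2 (4 * n)]
              field_simp
          _ ≤ _ := by
              gcongr
              rw [hη]; norm_num
      refine forced_extend hc hAS hYS hAm hAY (by omega) (forced_gauss hc _ Y (by omega) ?_)
      have hs4 : Function.update k i (k i - A.card) true
          + Function.update k i (k i - A.card) false = s - 4 * n := by omega
      rw [hs4]
      refine le_trans ?_ hYbig
      refine mul_le_mul_of_nonneg_left (Real.exp_le_exp.2 (neg_le_neg ?_)) (by positivity)
      have hsn : s - 4 * n ≤ 2 * (M * n) := by omega
      have hsn' : ((s - 4 * n : ℕ) : ℝ) ≤ 2 * (M * n) := by exact_mod_cast hsn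
      have hs0 : (0 : ℝ) < ((s - 4 * n : ℕ) : ℝ) := by
        have : 0 < s - 4 * n := by omega
        exact_mod_cast this
      have hdiff : (3 * (n : ℝ)) ^ 2 ≤ ((Function.update k i (k i - A.card) true : ℕ) -
          (Function.update k i (k i - A.card) false : ℕ) : ℝ) ^ 2 := by
        rw [sq_le_sq, abs_of_nonneg (by positivity : (0 : ℝ) ≤ 3 * n), hAc]
        cases i
        · have : 3 * n + (k false - 4 * n) ≤ k true := by omega
          have : 3 * (n : ℝ) + (k false - 4 * n : ℕ) ≤ k true := by exact_mod_cast this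
          simp only [Function.update_self, ne_eq, Bool.true_eq_false, not_false_eq_true,
            Function.update_of_ne]
          rw [le_abs]; left; linarith
        · have : 3 * n + (k true - 4 * n) ≤ k false := by omega
          have : 3 * (n : ℝ) + (k true - 4 * n : ℕ) ≤ k false := by exact_mod_cast this
          simp only [Function.update_self, ne_eq, Bool.false_eq_true, not_false_eq_true,
            Function.update_of_ne]
          rw [le_abs]; right; linarith
      have hM0 : (0 : ℝ) < M := by rw [hM]; norm_num
      calc 9 * (n : ℝ) / (4 * M) = (3 * (n : ℝ)) ^ 2 / (2 * (2 * (M * n))) := by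
            field_simp; norm_num
        _ ≤ _ := by gcongr

/-- The exponential improvement, uniformly for all pairs with a given sum. -/
lemma forced_offdiag : ∃ ε : ℝ, 0 < ε ∧ ∃ C : ℝ, 0 < C ∧ ∃ t₀ : ℕ, ∀ t : ℕ, t₀ ≤ t →
    ∀ c : ℕ → ℕ → Bool, (∀ u v, c u v = c v u) → ∀ (k : Bool → ℕ) (S : Finset ℕ),
    k true + k false = t → C * 2 ^ t * Real.exp (-(ε * t)) ≤ S.card → Forced c k S := by
  obtain ⟨M, hM⟩ : ∃ M : ℕ, M = 2 ^ 40 := ⟨_, rfl⟩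
  obtain ⟨η, hη⟩ : ∃ η : ℝ, η = 1 / 2 ^ 47 := ⟨_, rfl⟩
  have hη0 : 0 < η := by rw [hη]; positivity
  have hη1 : η ≤ 1 / 2 := by rw [hη]; norm_num
  have hMN : 0 < M := by rw [hM]; norm_num
  have hM0 : (1 : ℝ) ≤ M := by exact_mod_cast hMN
  obtain ⟨δ, hδ⟩ : ∃ δ : ℝ, δ = η / (4 * M) := ⟨_, rfl⟩
  have hδ0 : 0 < δ := by rw [hδ]; positivity
  have hδ1 : δ ≤ 1 := by
    rw [hδ, div_le_one (by positivity)]; linarith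
  refine ⟨δ ^ 2 / 2, by positivity, 4 ^ M, by positivity, 2 * M * 2 ^ 97 + 1, ?_⟩
  intro t ht c hc k S hk hS
  have ht0 : 0 < t := by omega
  have ht0' : (0 : ℝ) < t := by exact_mod_cast ht0
  have hC1 : (1 : ℝ) ≤ 4 ^ M := one_le_pow₀ (by norm_num)
  have hkR : (k true : ℝ) + k false = t := by exact_mod_cast hk
  by_cases hd : δ * t ≤ |(k true : ℝ) - k false|
  · refine forced_gauss hc k S (by omega) (le_trans ?_ hS)
    rw [hk]
    have h1 : δ ^ 2 / 2 * t ≤ ((k true : ℝ) - k false) ^ 2 / (2 * (t : ℝ)) := by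
      rw [le_div_iff₀ (by positivity), ← sq_abs ((k true : ℝ) - k false)]
      have := pow_le_pow_left₀ (by positivity) hd 2
      nlinarith
    calc (2 : ℝ) ^ t * Real.exp (-(((k true : ℝ) - k false) ^ 2 / (2 * (t : ℝ))))
        ≤ 2 ^ t * Real.exp (-(δ ^ 2 / 2 * t)) :=
          mul_le_mul_of_nonneg_left (Real.exp_le_exp.2 (neg_le_neg h1)) (by positivity)
      _ = 1 * (2 ^ t * Real.exp (-(δ ^ 2 / 2 * t))) := (one_mul _).symm
      _ ≤ 4 ^ M * (2 ^ t * Real.exp (-(δ ^ 2 / 2 * t))) :=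
          mul_le_mul_of_nonneg_right hC1 (by positivity)
      _ = _ := by ring
  · push Not at hd
    rw [abs_lt] at hd
    obtain ⟨m, hm⟩ : ∃ m, m = max (k true) (k false) := ⟨_, rfl⟩
    have hm1 : k true ≤ m := by omega
    have hm2 : k false ≤ m := by omega
    have hm3 : t ≤ 2 * m := by omega
    have hm4 : 2 * (m : ℝ) ≤ t + δ * t := by
      rcases max_choice (k true) (k false) with h | h <;> rw [h] at hm <;> rw [hm] <;> linarith
    obtain ⟨n, hn⟩ : ∃ n, n = m / M + 1 := ⟨_, rfl⟩
    have hdm := Nat.div_add_mod m M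
    have hml := Nat.mod_lt m hMN
    have hMn : M * n = M * (m / M) + M := by rw [hn]; ring
    have hn1 : m ≤ M * n := by omega
    have hn2 : M * n ≤ m + M := by omega
    have hnbig : 2 ^ 97 ≤ n := by
      by_contra hcon
      push Not at hcon
      have : M * n ≤ M * 2 ^ 97 := Nat.mul_le_mul_left _ hcon.le
      have e : 2 * M * 2 ^ 97 = 2 * (M * 2 ^ 97) := by ring
      omega
    have hnt : (t : ℝ) ≤ 2 * M * n := by
      have : t ≤ 2 * (M * n) := by omega
      have : (t : ℝ) ≤ 2 * (M * n) := by exact_mod_cast this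
      linarith
    refine Forced.mono (k := fun _ => M * n) (chase hc M n hM hnbig η hη n le_rfl _ S ?_ ?_ ?_
      (le_trans ?_ hS)) ?_
    · ring
    · simp
    · simp
    · have a1 : (2 : ℝ) ^ (M * n + M * n) ≤ 4 ^ M * (2 ^ t * Real.exp (δ * t)) := by
        have b1 : (2 : ℝ) ^ (2 * m - t) ≤ Real.exp (δ * t) := by
          have b2 : (2 : ℝ) ≤ Real.exp 1 := by linarith [Real.exp_one_gt_d9]
          have b3 : ((2 * m - t : ℕ) : ℝ) ≤ δ * t := by
            rw [Nat.cast_sub hm3]; push_cast; linarith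
          calc (2 : ℝ) ^ (2 * m - t) ≤ Real.exp 1 ^ (2 * m - t) := by gcongr
            _ = Real.exp ((2 * m - t : ℕ) * 1) := (Real.exp_nat_mul _ _).symm
            _ ≤ _ := by rw [mul_one]; exact Real.exp_le_exp.2 b3
        calc (2 : ℝ) ^ (M * n + M * n) ≤ 2 ^ (2 * M + (t + (2 * m - t))) :=
              pow_le_pow_right₀ (by norm_num) (by omega)
          _ = 4 ^ M * (2 ^ t * 2 ^ (2 * m - t)) := by
              rw [pow_add, pow_mul, pow_add]; norm_num
          _ ≤ _ := by gcongr
      have a2 : ((1 + 2 * η) ^ n)⁻¹ ≤ Real.exp (-(2 * δ * t)) := by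
        have b1 : Real.exp η ≤ 1 + 2 * η := by
          have := Real.add_one_le_exp (-η)
          rw [Real.exp_neg] at this
          have h3 : Real.exp η ≤ (-η + 1)⁻¹ := by
            rw [le_inv_comm₀ (Real.exp_pos _) (by linarith)]; exact this
          refine h3.trans ?_
          rw [inv_le_iff_one_le_mul₀ (by linarith)]
          nlinarith
        rw [Real.exp_neg]
        refine inv_anti₀ (Real.exp_pos _) ?_
        calc Real.exp (2 * δ * t) ≤ Real.exp (n * η) := by
              apply Real.exp_le_exp.2
              rw [hδ]
              have : η * t ≤ η * (2 * M * n) := mul_le_mul_of_nonneg_left hnt hη0.le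
              rw [show 2 * (η / (4 * M)) * (t : ℝ) = (η * t) / (2 * M) by field_simp; norm_num]
              rw [div_le_iff₀ (by positivity)]
              linarith
          _ = Real.exp η ^ n := Real.exp_nat_mul _ _
          _ ≤ _ := by gcongr
      calc (2 : ℝ) ^ (M * n + M * n) * ((1 + 2 * η) ^ n)⁻¹
          ≤ 4 ^ M * (2 ^ t * Real.exp (δ * t)) * Real.exp (-(2 * δ * t)) := by gcongr
        _ = 4 ^ M * 2 ^ t * Real.exp (-(δ * t)) := by
            rw [show -(δ * (t : ℝ)) = δ * t + -(2 * δ * t) by ring, Real.exp_add]; ring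
        _ ≤ _ := by
            refine mul_le_mul_of_nonneg_left (Real.exp_le_exp.2 (neg_le_neg ?_)) (by positivity)
            have : δ ^ 2 / 2 ≤ δ := by nlinarith
            gcongr
    · intro i
      cases i
      · exact hm2.trans hn1
      · exact hm1.trans hn1

/-! ### The game -/

/-- Builder can force the property `Q` within `n` further rounds. -/
def ForceIn (Q : History 2 → Prop) : ℕ → History 2 → Prop
  | 0, h => Q h
  | n + 1, h => Q h ∨ ∃ e : Sym2 ℕ, ¬ e.IsDiag ∧ e ∉ h.map Prod.fst ∧
      ∀ i, ForceIn Q n (h ++ [(e, i)])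

lemma ForceIn.of {Q : History 2 → Prop} {n : ℕ} {h : History 2} (hQ : Q h) : ForceIn Q n h := by
  cases n with
  | zero => exact hQ
  | succ n => exact Or.inl hQ

lemma ForceIn.mono {Q : History 2 → Prop} {n : ℕ} : ∀ {m : ℕ} {h : History 2}, n ≤ m →
    ForceIn Q n h → ForceIn Q m h := by
  induction n with
  | zero => intro m h _ hQ; exact ForceIn.of hQ
  | succ n ih =>
    intro m h hm hf
    obtain ⟨m, rfl⟩ : ∃ m', m = m' + 1 := ⟨m - 1, by omega⟩
    rcases hf with hQ | ⟨e, h1, h2, h3⟩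
    · exact Or.inl hQ
    · exact Or.inr ⟨e, h1, h2, fun i => ih (by omega) (h3 i)⟩

lemma ForceIn.trans {Q R : History 2 → Prop} {m : ℕ} (hQR : ∀ h, Q h → ForceIn R m h) {n : ℕ} :
    ∀ {h : History 2}, ForceIn Q n h → ForceIn R (n + m) h := by
  induction n with
  | zero => intro h hQ; exact (hQR h hQ).mono (by omega)
  | succ n ih =>
    intro h hf
    rcases hf with hQ | ⟨e, h1, h2, h3⟩
    · exact (hQR h hQ).mono (by omega)
    · rw [show n + 1 + m = (n + m) + 1 by omega]
      exact Or.inr ⟨e, h1, h2, fun i => ih (h3 i)⟩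

lemma ForceIn.imp {Q R : History 2 → Prop} (hQR : ∀ h, Q h → R h) {n : ℕ}
    {h : History 2} (hf : ForceIn Q n h) : ForceIn R n h :=
  ForceIn.trans (m := 0) (fun h hq => hQR h hq) hf

lemma force_edges (E : Finset (Sym2 ℕ)) : (∀ e ∈ E, ¬ e.IsDiag) → ∀ h : History 2,
    ForceIn (fun h' => h ⊆ h' ∧ ∀ e ∈ E, ∃ i, (e, i) ∈ h') E.card h := by
  classical
  induction E using Finset.induction_on with
  | empty => intro _ h; exact ForceIn.of ⟨fun _ hx => hx, by simp⟩
  | insert e E he ih =>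
    intro hE h
    rw [Finset.card_insert_of_notMem he]
    have ih' := ih (fun e' he' => hE e' (Finset.mem_insert_of_mem he'))
    by_cases hmem : e ∈ h.map Prod.fst
    · refine ForceIn.mono (Nat.le_succ _) (ForceIn.imp ?_ (ih' h))
      rintro h' ⟨h1, h2⟩
      refine ⟨h1, fun e' he' => ?_⟩
      rcases Finset.mem_insert.1 he' with rfl | he'
      · obtain ⟨⟨x, i⟩, hx, rfl⟩ := List.mem_map.1 hmem
        exact ⟨i, h1 hx⟩
      · exact h2 e' he'
    · refine Or.inr ⟨e, hE e (Finset.mem_insert_self _ _), hmem, fun i => ?_⟩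
      refine ForceIn.imp ?_ (ih' (h ++ [(e, i)]))
      rintro h' ⟨h1, h2⟩
      refine ⟨fun x hx => h1 (List.mem_append_left _ hx), fun e' he' => ?_⟩
      rcases Finset.mem_insert.1 he' with rfl | he'
      · exact ⟨i, h1 (by simp)⟩
      · exact h2 e' he'

lemma exists_fresh (h : History 2) : ∃ e : Sym2 ℕ, ¬ e.IsDiag ∧ e ∉ h.map Prod.fst := by
  classical
  have hinj : Function.Injective (fun n : ℕ => s(0, n + 1)) := by
    intro a b hab
    simp only [Sym2.eq_iff] at hab
    omega
  obtain ⟨e, ⟨n, rfl⟩, he⟩ := (Set.infinite_range_of_injective hinj).exists_notMem_finset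
    (h.map Prod.fst).toFinset
  refine ⟨_, ?_, fun h' => he (by simpa using h')⟩
  simp

lemma force_strategy (Q : History 2 → Prop) : ∃ B : History 2 → Sym2 ℕ, validBuilder B ∧
    ∀ (h : History 2) (n : ℕ), ForceIn Q (n + 1) h → ¬ Q h →
      ∀ i, ForceIn Q n (h ++ [(B h, i)]) := by
  classical
  have key : ∀ h : History 2, ∃ e : Sym2 ℕ, (¬ e.IsDiag ∧ e ∉ h.map Prod.fst) ∧
      ∀ n : ℕ, ForceIn Q (n + 1) h → ¬ Q h → ∀ i, ForceIn Q n (h ++ [(e, i)]) := by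
    intro h
    by_cases hex : ∃ n, ForceIn Q (n + 1) h ∧ ¬ Q h
    · obtain ⟨hf, hQ⟩ := Nat.find_spec hex
      rcases hf with hf | ⟨e, h1, h2, h3⟩
      · exact absurd hf hQ
      · refine ⟨e, ⟨h1, h2⟩, fun n hn hq i => ?_⟩
        exact (h3 i).mono (Nat.find_min' hex ⟨hn, hq⟩)
    · push Not at hex
      obtain ⟨e, he⟩ := exists_fresh h
      exact ⟨e, he, fun n hn hq => absurd (hex n hn) hq⟩
  choose B hB using key
  exact ⟨B, fun h => (hB h).1, fun h => (hB h).2⟩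

lemma force_play {Q : History 2 → Prop} {N : ℕ} (hN : ForceIn Q N []) :
    ∃ B : History 2 → Sym2 ℕ, validBuilder B ∧ ∀ P : History 2 → Sym2 ℕ → Fin 2,
      ∃ n ≤ N, Q (play B P n) := by
  obtain ⟨B, hB, hs⟩ := force_strategy Q
  refine ⟨B, hB, fun P => ?_⟩
  by_contra hcon
  push Not at hcon
  have key : ∀ n, n ≤ N → ForceIn Q (N - n) (play B P n) := by
    intro n
    induction n with
    | zero => intro _; exact hN
    | succ n ih =>
      intro hn
      have h1 := ih (by omega)
      rw [show N - n = (N - (n + 1)) + 1 by omega] at h1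
      exact hs _ _ h1 (hcon n (by omega)) _
  have := key N le_rfl
  rw [Nat.sub_self] at this
  exact hcon N le_rfl this

/-- The two colours. -/
def colB (i : Bool) : Fin 2 := if i then 0 else 1

/-- `A` is a clique of colour `i` in the history `h`. -/
def Cl (h : History 2) (i : Bool) (A : Finset ℕ) : Prop :=
  ∀ u ∈ A, ∀ v ∈ A, u ≠ v → (s(u, v), colB i) ∈ h

/-- The invariant of the first phase of the strategy of Builder. -/
def Stt (h : History 2) (A : Bool → Finset ℕ) (S : Finset ℕ) : Prop :=
  (∀ i, Cl h i (A i)) ∧ ∀ i, ∀ a ∈ A i, ∀ x ∈ S, a ≠ x ∧ (s(a, x), colB i) ∈ h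

/-- Builder has won. -/
def Win (t : ℕ) (h : History 2) : Prop := ∃ i, ∃ A : Finset ℕ, A.card = t ∧ Cl h i A

lemma colB_cases {h : History 2} {e : Sym2 ℕ} (he : ∃ i, (e, i) ∈ h) :
    (e, colB true) ∈ h ∨ (e, colB false) ∈ h := by
  obtain ⟨i, hi⟩ := he
  fin_cases i
  · left; exact hi
  · right; exact hi

lemma win_of_all {t r : ℕ}
    (H : ∀ c : ℕ → ℕ → Bool, (∀ u v, c u v = c v u) → ∀ (k : Bool → ℕ) (S : Finset ℕ),
      k true + k false = t → r ≤ S.card → Forced c k S)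
    (h : History 2) (A : Bool → Finset ℕ) (S : Finset ℕ)
    (hA : (A true).card + (A false).card = t) (hst : Stt h A S) (hS : r ≤ S.card)
    (hall : ∀ u ∈ S, ∀ v ∈ S, u ≠ v → ∃ i, (s(u, v), i) ∈ h) : Win t h := by
  classical
  obtain ⟨i, X, hX, hXc, hXm⟩ := H (fun u v => decide ((s(u, v), colB true) ∈ h))
    (fun u v => by rw [Sym2.eq_swap]) (fun i => t - (A i).card) S (by omega) hS
  have hXcl : Cl h i X := by
    intro u hu v hv huv
    have h1 := hXm u hu v hv huv
    rcases colB_cases (hall u (hX hu) v (hX hv) huv) with h2 | h2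
    · simp [h2] at h1
      subst h1; exact h2
    · cases i
      · exact h2
      · simpa using h1
  have hAi : (A i).card ≤ t := by cases i <;> omega
  refine ⟨i, A i ∪ X, ?_, ?_⟩
  · rw [Finset.card_union_of_disjoint, hXc]
    · simp only; omega
    · rw [Finset.disjoint_left]
      intro a ha hb
      exact (hst.2 i a ha a (hX hb)).1 rfl
  · intro u hu v hv huv
    rw [Finset.mem_union] at hu hv
    rcases hu with hu | hu <;> rcases hv with hv | hv
    · exact hst.1 i u hu v hv huv
    · exact (hst.2 i u hu v (hX hv)).2
    · rw [Sym2.eq_swap]; exact (hst.2 i v hv u (hX hu)).2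
    · exact hXcl u hu v hv huv

lemma Stt.mono {h h' : History 2} {A : Bool → Finset ℕ} {S S' : Finset ℕ} (hst : Stt h A S)
    (hh : h ⊆ h') (hS : S' ⊆ S) : Stt h' A S' :=
  ⟨fun i u hu v hv huv => hh (hst.1 i u hu v hv huv),
    fun i a ha x hx => ⟨(hst.2 i a ha x (hS hx)).1, hh (hst.2 i a ha x (hS hx)).2⟩⟩

lemma stt_insert {h : History 2} {A : Bool → Finset ℕ} {S S' : Finset ℕ} {v : ℕ} {i : Bool}
    (hst : Stt h A S) (hv : v ∈ S) (hS : S' ⊆ S)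
    (hS' : ∀ x ∈ S', v ≠ x ∧ (s(v, x), colB i) ∈ h) :
    Stt h (Function.update A i (insert v (A i))) S' := by
  refine ⟨fun j => ?_, fun j => ?_⟩
  · by_cases hj : j = i
    · subst hj
      rw [Function.update_self]
      intro a ha b hb hab
      rcases Finset.mem_insert.1 ha with ha1 | ha1 <;>
        rcases Finset.mem_insert.1 hb with hb1 | hb1
      · exact absurd (ha1.trans hb1.symm) hab
      · rw [Sym2.eq_swap, ha1]; exact (hst.2 j b hb1 v hv).2
      · rw [hb1]; exact (hst.2 j a ha1 v hv).2
      · exact hst.1 j a ha1 b hb1 hab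
    · rw [Function.update_of_ne hj]; exact hst.1 j
  · by_cases hj : j = i
    · subst hj
      rw [Function.update_self]
      intro a ha x hx
      rcases Finset.mem_insert.1 ha with rfl | ha
      · exact hS' x hx
      · exact hst.2 j a ha x (hS hx)
    · rw [Function.update_of_ne hj]
      intro a ha x hx
      exact hst.2 j a ha x (hS hx)

lemma force_main {t r : ℕ} (hr : 0 < r)
    (H : ∀ c : ℕ → ℕ → Bool, (∀ u v, c u v = c v u) → ∀ (k : Bool → ℕ) (S : Finset ℕ),
      k true + k false = t → r ≤ S.card → Forced c k S) (m : ℕ) :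
    ∀ (h : History 2) (A : Bool → Finset ℕ) (S : Finset ℕ),
      (A true).card + (A false).card + m = t → Stt h A S → S.card = 2 ^ m * r →
      ForceIn (Win t) (2 * (2 ^ m * r) + r ^ 2) h := by
  classical
  induction m with
  | zero =>
    intro h A S hA hst hS
    simp only [pow_zero, one_mul] at hS ⊢
    have hE := force_edges (S.offDiag.image (fun p => s(p.1, p.2))) (by
      intro e he
      obtain ⟨p, hp, rfl⟩ := Finset.mem_image.1 he
      rw [Finset.mem_offDiag] at hp
      simpa using hp.2.2) h
    refine ForceIn.mono ?_ (ForceIn.imp ?_ hE)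
    · refine Finset.card_image_le.trans ?_
      rw [Finset.offDiag_card, hS, sq]
      omega
    · rintro h' ⟨h1, h2⟩
      refine win_of_all H h' A S (by omega) (hst.mono h1 subset_rfl) hS.ge ?_
      intro u hu v hv huv
      exact h2 _ (Finset.mem_image.2 ⟨(u, v), Finset.mem_offDiag.2 ⟨hu, hv, huv⟩, rfl⟩)
  | succ m ih =>
    intro h A S hA hst hS
    have hpos : 0 < S.card := by rw [hS]; positivity
    obtain ⟨v, hv⟩ := Finset.card_pos.1 hpos
    have hE := force_edges ((S.erase v).image (fun x => s(v, x))) (by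
      intro e he
      obtain ⟨x, hx, rfl⟩ := Finset.mem_image.1 he
      rw [Finset.mem_erase] at hx
      simpa using hx.1.symm) h
    have hcard : ((S.erase v).image (fun x => s(v, x))).card ≤ 2 ^ (m + 1) * r := by
      refine Finset.card_image_le.trans ?_
      rw [← hS]; exact Finset.card_erase_le
    have hp : 2 ^ (m + 1) * r = 2 * (2 ^ m * r) := by ring
    rw [show 2 * (2 ^ (m + 1) * r) + r ^ 2 = 2 ^ (m + 1) * r + (2 * (2 ^ m * r) + r ^ 2) by
      rw [hp]; ring]
    refine ForceIn.trans ?_ (hE.mono hcard)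
    rintro h' ⟨h1, h2⟩
    have hcov : S.erase v ⊆ (S.erase v).filter (fun x => (s(v, x), colB true) ∈ h') ∪
        (S.erase v).filter (fun x => (s(v, x), colB false) ∈ h') := by
      intro x hx
      rw [Finset.mem_union, Finset.mem_filter, Finset.mem_filter]
      rcases colB_cases (h2 _ (Finset.mem_image.2 ⟨x, hx, rfl⟩)) with h3 | h3
      · exact Or.inl ⟨hx, h3⟩
      · exact Or.inr ⟨hx, h3⟩
    have hcc := (Finset.card_le_card hcov).trans (Finset.card_union_le _ _)
    rw [Finset.card_erase_of_mem hv] at hcc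
    have hex : ∃ i, 2 ^ m * r ≤ ((S.erase v).filter (fun x => (s(v, x), colB i) ∈ h')).card := by
      by_contra hcon
      push Not at hcon
      have c1 := hcon true
      have c2 := hcon false
      omega
    obtain ⟨i, hi⟩ := hex
    obtain ⟨S', hS', hS'c⟩ := Finset.exists_subset_card_eq hi
    have hsub : S' ⊆ S := hS'.trans ((Finset.filter_subset _ _).trans (Finset.erase_subset _ _))
    have hvA : v ∉ A i := fun hva => (hst.2 i v hva v hv).1 rfl
    refine ih h' (Function.update A i (insert v (A i))) S' ?_
      (stt_insert (hst.mono h1 subset_rfl) hv hsub ?_) hS'c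
    · cases i <;> simp [Finset.card_insert_of_notMem hvA] <;> omega
    · intro x hx
      have := Finset.mem_filter.1 (hS' hx)
      exact ⟨(Finset.mem_erase.1 this.1).1.symm, this.2⟩

lemma containsCopy_of_win {t : ℕ} {h : History 2} (hw : Win t h) :
    ∃ i : Fin 2, containsCopy (⊤ : SimpleGraph (Fin t)) (colourGraph h i) := by
  obtain ⟨i, A, hA, hcl⟩ := hw
  refine ⟨colB i, A.orderEmbOfFin hA, (A.orderEmbOfFin hA).injective, fun u v huv => ?_⟩
  have hne : A.orderEmbOfFin hA u ≠ A.orderEmbOfFin hA v :=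
    fun he => huv ((A.orderEmbOfFin hA).injective he)
  rw [colourGraph, SimpleGraph.fromEdgeSet_adj]
  exact ⟨hcl _ (A.orderEmbOfFin_mem hA u) _ (A.orderEmbOfFin_mem hA v) hne, hne⟩

lemma onlineRamsey_le {t r : ℕ} (hr : 0 < r)
    (H : ∀ c : ℕ → ℕ → Bool, (∀ u v, c u v = c v u) → ∀ (k : Bool → ℕ) (S : Finset ℕ),
      k true + k false = t → r ≤ S.card → Forced c k S) :
    onlineRamsey 2 (⊤ : SimpleGraph (Fin t)) ≤ 2 * (2 ^ t * r) + r ^ 2 := by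
  have hf := force_main hr H t [] (fun _ => ∅) (Finset.range (2 ^ t * r)) (by simp)
    ⟨fun i u hu => by simp at hu, fun i a ha => by simp at ha⟩ (by simp)
  obtain ⟨B, hB, hP⟩ := force_play hf
  refine Nat.sInf_le ⟨B, hB, fun P => ?_⟩
  obtain ⟨n, hn, hw⟩ := hP P
  exact ⟨n, hn, containsCopy_of_win hw⟩

/-- The final asymptotic comparison. -/
lemma final_compare (ε D : ℝ) (hε : 0 < ε) (hD : 0 < D) : ∃ t₀ : ℕ, ∀ t : ℕ, t₀ ≤ t →
    D * Real.exp (-(ε * t)) ≤ (t : ℝ) ^ (-(1 * Real.log t / Real.log (Real.log t))) := by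
  have h1 : ∀ᶠ x : ℝ in Filter.atTop, Real.log x ^ 2 ≤ ε / 2 * x := by
    have := (Real.isLittleO_pow_log_id_atTop (n := 2)).bound (show (0 : ℝ) < ε / 2 by positivity)
    filter_upwards [this, Filter.eventually_ge_atTop 0] with x hx hx0
    simpa [abs_of_nonneg hx0] using hx
  have h2 : ∀ᶠ x : ℝ in Filter.atTop, 1 ≤ Real.log (Real.log x) :=
    (Real.tendsto_log_atTop.comp Real.tendsto_log_atTop).eventually_ge_atTop 1
  have h3 : ∀ᶠ x : ℝ in Filter.atTop, Real.log D ≤ ε / 2 * x :=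
    (Filter.tendsto_id.const_mul_atTop (show (0 : ℝ) < ε / 2 by positivity)).eventually_ge_atTop _
  have h4 := tendsto_natCast_atTop_atTop (R := ℝ) |>.eventually
    (h1.and (h2.and (h3.and (Filter.eventually_gt_atTop 0))))
  obtain ⟨t₀, ht₀⟩ := Filter.eventually_atTop.1 h4
  refine ⟨t₀, fun t ht => ?_⟩
  obtain ⟨a1, a2, a3, a4⟩ := ht₀ t ht
  rw [Real.rpow_def_of_pos a4, ← Real.exp_log hD, ← Real.exp_add]
  apply Real.exp_le_exp.2
  have : Real.log t * (1 * Real.log t / Real.log (Real.log t)) ≤ Real.log t ^ 2 := by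
    rw [show Real.log t * (1 * Real.log t / Real.log (Real.log t))
      = Real.log t ^ 2 / Real.log (Real.log t) by ring]
    exact div_le_self (sq_nonneg _) a2
  linarith

theorem online_ramsey_upper :
    ∃ c : ℝ, 0 < c ∧ ∃ t₀ : ℕ, ∀ t : ℕ, t₀ ≤ t →
      (onlineRamsey 2 (⊤ : SimpleGraph (Fin t)) : ℝ) ≤
        (t : ℝ) ^ (-(c * Real.log t / Real.log (Real.log t))) * 4 ^ t := by
  obtain ⟨ε, hε, C, hC, t₁, H⟩ := forced_offdiag
  obtain ⟨δ, hδ⟩ : ∃ δ : ℝ, δ = min ε (1 / 2) := ⟨_, rfl⟩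
  have hδ0 : 0 < δ := by rw [hδ]; positivity
  have hδε : δ ≤ ε := by rw [hδ]; exact min_le_left _ _
  have hδ1 : δ ≤ 1 / 2 := by rw [hδ]; exact min_le_right _ _
  obtain ⟨t₂, H2⟩ := final_compare δ (2 * (C + 1) + (C + 1) ^ 2) hδ0 (by positivity)
  refine ⟨1, one_pos, max t₁ t₂, fun t ht => ?_⟩
  have ht1 : t₁ ≤ t := (le_max_left _ _).trans ht
  have ht2 : t₂ ≤ t := (le_max_right _ _).trans ht
  obtain ⟨x, hx⟩ : ∃ x : ℝ, x = Real.exp (-(δ * t)) := ⟨_, rfl⟩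
  have hx0 : 0 < x := by rw [hx]; exact Real.exp_pos _
  have hx1 : x ≤ 1 := by
    rw [hx, Real.exp_le_one_iff, neg_nonpos]; positivity
  have hεx : Real.exp (-(ε * t)) ≤ x := by
    rw [hx]
    exact Real.exp_le_exp.2 (neg_le_neg (mul_le_mul_of_nonneg_right hδε (Nat.cast_nonneg _)))
  have h2x : 1 ≤ 2 ^ t * x := by
    have e : Real.exp (1 / 2) ≤ 2 := by
      have h := Real.exp_one_lt_d9
      have h' : Real.exp (1 / 2) ^ 2 = Real.exp 1 := by
        rw [← Real.exp_nat_mul]; norm_num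
      nlinarith [Real.exp_pos (1 / 2)]
    calc (1 : ℝ) = Real.exp (t * (1 / 2)) * Real.exp (-(t * (1 / 2))) := by
          rw [← Real.exp_add]; simp
      _ ≤ 2 ^ t * x := by
          rw [Real.exp_nat_mul, hx]
          refine mul_le_mul (pow_le_pow_left₀ (Real.exp_pos _).le e _) (Real.exp_le_exp.2 ?_)
            (Real.exp_pos _).le (by positivity)
          have := mul_le_mul_of_nonneg_right hδ1 (Nat.cast_nonneg (α := ℝ) t)
          linarith
  obtain ⟨r, hr⟩ : ∃ r : ℕ, r = ⌈C * 2 ^ t * x⌉₊ := ⟨_, rfl⟩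
  have hr0 : 0 < r := by rw [hr]; exact Nat.ceil_pos.2 (by positivity)
  have hr1 : C * 2 ^ t * x ≤ r := by rw [hr]; exact Nat.le_ceil _
  have hr2 : (r : ℝ) ≤ (C + 1) * (2 ^ t * x) := by
    have : (r : ℝ) < C * 2 ^ t * x + 1 := by rw [hr]; exact Nat.ceil_lt_add_one (by positivity)
    linarith
  have hN := onlineRamsey_le (t := t) hr0 (fun c hc k S hk hS => H t ht1 c hc k S hk (by
    calc C * 2 ^ t * Real.exp (-(ε * t)) ≤ C * 2 ^ t * x := by gcongr
      _ ≤ r := hr1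
      _ ≤ S.card := by exact_mod_cast hS))
  have hN' : (onlineRamsey 2 (⊤ : SimpleGraph (Fin t)) : ℝ) ≤ 2 * (2 ^ t * r) + r ^ 2 := by
    exact_mod_cast hN
  have h4 : (4 : ℝ) ^ t = 2 ^ t * 2 ^ t := by rw [← mul_pow]; norm_num
  calc (onlineRamsey 2 (⊤ : SimpleGraph (Fin t)) : ℝ) ≤ 2 * (2 ^ t * r) + r ^ 2 := hN'
    _ ≤ 2 * (2 ^ t * ((C + 1) * (2 ^ t * x))) + ((C + 1) * (2 ^ t * x)) ^ 2 := by gcongr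
    _ = (2 * (C + 1) + (C + 1) ^ 2 * x) * x * 4 ^ t := by rw [h4]; ring
    _ ≤ (2 * (C + 1) + (C + 1) ^ 2 * 1) * x * 4 ^ t := by gcongr
    _ = (2 * (C + 1) + (C + 1) ^ 2) * x * 4 ^ t := by rw [mul_one]
    _ ≤ _ := by
        rw [hx]
        exact mul_le_mul_of_nonneg_right (H2 t ht2) (by positivity)
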